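/- The augmented column E ←(μ̃)− Y_0 ←(∂_1)− Y_1 ←(∂_2)− Y_2 ← ⋯, where μ̃(a⊗(h_0⊗h_1)) = −a f(h_0^{(1)},h_1^{(1)}) # h_0^{(2)}h_1^{(2)}, is contractible as a complex of left E-modules with homotopy σ^{−1}_{s+1}(x) = (−1)^s x⊗1_H. Moreover, defining left E-linear maps σ^l recursively by σ^l_{r+l+1,s−l} = −Σ_{i=0}^{l−1} σ^0_{r+l+1,s−l}∘d^{l−i}_{r+i+1,s−i}∘σ^i_{r+i+1,s−i} (0 < l ≤ s, r ≥ −1), the family σ̄_0 = σ^0_{00}∘σ^{−1}_0 and σ̄_{n+1} = −Σ_{l=0}^{n+1} σ^l_{l,n−l+1}∘σ^{−1}_{n+1}∘μ_n + Σ_{r+s=n} Σ_{l=0}^{s} σ^l_{r+l+1,s−l} (n ≥ 0) is a contracting homotopy, by left E-linear maps, of the relative projective resolution E ←(−μ)− X_0 ←(d_1)− X_1 ← ⋯ of Theorem 1.1.1. -/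

import Mathlib

open TensorProduct DirectSum

set_option maxHeartbeats 1000000
set_option maxSynthPendingDepth 3
set_option synthInstance.maxHeartbeats 400000

noncomputable section

namespace HopfCrossed

variable (k : Type) [CommRing k]

def TpowCat (V : ModuleCat k) : ℕ → ModuleCat k
  | 0 => ModuleCat.of k k
  | n + 1 => ModuleCat.of k (V ⊗[k] (TpowCat V n))

abbrev Tpow (V : Type) [AddCommGroup V] [Module k V] (n : ℕ) : Type :=
  TpowCat k (ModuleCat.of k V) n

def tp {V : Type} [AddCommGroup V] [Module k V] : ∀ {n : ℕ}, (Fin n → V) → Tpow k V n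
  | 0, _ => (1 : k)
  | _ + 1, v => (v 0) ⊗ₜ[k] (tp fun i => v i.succ)

section Coalg
variable {H : Type} [AddCommGroup H] [Module k H]

def itComul [Coalgebra k H] : ∀ n : ℕ, H →ₗ[k] Tpow k H (n + 1)
  | 0 => (TensorProduct.rid k H).symm.toLinearMap
  | n + 1 =>
      (TensorProduct.map LinearMap.id (itComul n)) ∘ₗ (Coalgebra.comul (R := k))

def SRep [Coalgebra k H] (n : ℕ) (h : H) (N : ℕ) (u : Fin N → Fin (n + 1) → H) : Prop :=
  itComul k n h = ∑ i, tp k (u i)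

def iterAct {A : Type} [AddCommGroup A] [Module k A]
    (act : H →ₗ[k] A →ₗ[k] A) : ∀ {s : ℕ}, (Fin s → H) → A → A
  | 0, _, a => a
  | _ + 1, h, a => act (h 0) (iterAct act (fun i => h i.succ) a)

end Coalg

/-- A weak action of a Hopf algebra `H` on a `k`-algebra `A` (Blattner–Cohen–Montgomery,
Doi–Takeuchi), written `act h a = a^h`. -/
structure WeakAction (k A H : Type) [CommRing k] [Ring A] [Algebra k A] [Ring H] [HopfAlgebra k H] : Type where
  act : H →ₗ[k] A →ₗ[k] A
  act_mul : ∀ (h : H) (a b : A) (N : ℕ) (u : Fin N → Fin 2 → H), SRep k 1 h N u →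
    act h (a * b) = ∑ i, act (u i 0) a * act (u i 1) b
  act_one : ∀ h : H, act h 1 = Coalgebra.counit (R := k) h • (1 : A)
  one_act : ∀ a : A, act 1 a = a

variable {A H : Type} [Ring A] [Algebra k A] [Ring H] [HopfAlgebra k H]
variable {k}

/-- Normality of the cocycle `f`. -/
def IsNormal (f : H →ₗ[k] H →ₗ[k] A) : Prop :=
  ∀ h : H, f h 1 = Coalgebra.counit (R := k) h • (1 : A) ∧
    f 1 h = Coalgebra.counit (R := k) h • (1 : A)

/-- The cocycle condition
`f(l⁽¹⁾,m⁽¹⁾)^{h⁽¹⁾} f(h⁽²⁾, l⁽²⁾m⁽²⁾) = f(h⁽¹⁾,l⁽¹⁾) f(h⁽²⁾l⁽²⁾, m)`. -/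
def IsCocycle (W : WeakAction k A H) (f : H →ₗ[k] H →ₗ[k] A) : Prop :=
  ∀ (h l m : H) (N₁ N₂ N₃ : ℕ) (u : Fin N₁ → Fin 2 → H) (v : Fin N₂ → Fin 2 → H)
    (w : Fin N₃ → Fin 2 → H),
    SRep k 1 h N₁ u → SRep k 1 l N₂ v → SRep k 1 m N₃ w →
    (∑ i, ∑ j, ∑ p, W.act (u i 0) (f (v j 0) (w p 0)) * f (u i 1) (v j 1 * w p 1)) =
      ∑ i, ∑ j, f (u i 0) (v j 0) * f (u i 1 * v j 1) m

/-- The twisted module condition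
`(a^{l⁽¹⁾})^{h⁽¹⁾} f(h⁽²⁾,l⁽²⁾) = f(h⁽¹⁾,l⁽¹⁾) a^{h⁽²⁾l⁽²⁾}`. -/
def IsTwistedModule (W : WeakAction k A H) (f : H →ₗ[k] H →ₗ[k] A) : Prop :=
  ∀ (h l : H) (a : A) (N₁ N₂ : ℕ) (u : Fin N₁ → Fin 2 → H) (v : Fin N₂ → Fin 2 → H),
    SRep k 1 h N₁ u → SRep k 1 l N₂ v →
    (∑ i, ∑ j, W.act (u i 0) (W.act (v j 0) a) * f (u i 1) (v j 1)) =
      ∑ i, ∑ j, f (u i 0) (v j 0) * W.act (u i 1 * v j 1) a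

variable (k A H) in
/-- A crossed product `E = A #_f H` of `A` by `H`:  a ring `E` identified with `A ⊗ H`
as a `k`-module, whose multiplication is given by the crossed product formula
`(a # h)(b # l) = a b^{h⁽¹⁾} f(h⁽²⁾,l⁽¹⁾) # h⁽³⁾ l⁽²⁾`. -/
structure CrossedProduct (E : Type) [Ring E] [Algebra k E] extends WeakAction k A H where
  f : H →ₗ[k] H →ₗ[k] A
  ι : (A ⊗[k] H) ≃ₗ[k] E
  ι_one : ι (1 ⊗ₜ[k] 1) = 1
  ι_mul : ∀ (a b : A) (h l : H) (N M : ℕ) (u : Fin N → Fin 3 → H) (v : Fin M → Fin 2 → H),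
    SRep k 2 h N u → SRep k 1 l M v →
    ι (a ⊗ₜ[k] h) * ι (b ⊗ₜ[k] l) =
      ∑ i, ∑ j, ι ((a * act (u i 0) b * f (u i 1) (v j 0)) ⊗ₜ[k] (u i 2 * v j 1))
  f_normal : IsNormal f
  f_cocycle : IsCocycle toWeakAction f
  f_twisted : IsTwistedModule toWeakAction f

namespace CrossedProduct

variable {E : Type} [Ring E] [Algebra k E] (S : CrossedProduct k A H E)

/-- The canonical map `A → E`, `a ↦ a # 1`. -/
def aE : A →ₗ[k] E := S.ι.toLinearMap ∘ₗ (TensorProduct.mk k A H).flip 1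

/-- The canonical map `H → E`, `h ↦ 1 # h`. -/
def hE : H →ₗ[k] E := S.ι.toLinearMap ∘ₗ (TensorProduct.mk k A H) 1

end CrossedProduct


section Hochschild

variable (k) in
/-- For a `k`-algebra `B`, the submodule `k·1 ⊆ B`. -/
abbrev unitSub (B : Type) [Ring B] [Algebra k B] : Submodule k B :=
  LinearMap.range (Algebra.linearMap k B)

variable (k) in
/-- `B̄ = B/k`. -/
abbrev Qbar (B : Type) [Ring B] [Algebra k B] : Type := B ⧸ unitSub k B

variable (k) in
/-- The canonical projection `B → B̄`. -/
abbrev qbar (B : Type) [Ring B] [Algebra k B] : B →ₗ[k] Qbar k B :=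
  (unitSub k B).mkQ

/-- A `B`-bimodule structure (with commuting `k`-linear left and right actions)
on a `k`-module `M`. -/
structure Bimod (k B M : Type) [CommRing k] [Ring B] [Algebra k B]
    [AddCommGroup M] [Module k M] : Type where
  l : B →ₗ[k] M →ₗ[k] M
  r : B →ₗ[k] M →ₗ[k] M
  l_one : l 1 = LinearMap.id
  r_one : r 1 = LinearMap.id
  l_mul : ∀ x y : B, l (x * y) = l x ∘ₗ l y
  r_mul : ∀ x y : B, r (x * y) = r y ∘ₗ r x
  lr_comm : ∀ x y : B, l x ∘ₗ r y = r y ∘ₗ l x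

/-- Replace the `r`-tuple `a` by the `(r-1)`-tuple obtained by multiplying the
`i`-th and `(i+1)`-st entries. -/
def mulAt {A : Type} [Mul A] {r : ℕ} (a : Fin (r + 1) → A) (i : Fin r) (j : Fin r) : A :=
  if (j : ℕ) < (i : ℕ) then a j.castSucc
  else if (j : ℕ) = (i : ℕ) then a j.castSucc * a j.succ else a j.succ

variable (k) in
/-- The degree-`n` part `M ⊗ B̄^{⊗n}` of the normalized Hochschild chain complex. -/
abbrev HCh (B M : Type) [Ring B] [Algebra k B] [AddCommGroup M] [Module k M]
    (n : ℕ) : Type :=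
  M ⊗[k] Tpow k (Qbar k B) n

variable (k) in
/-- `IsHochschildD l r bd` says that `bd` is the differential of the normalized
Hochschild chain complex of `B` with coefficients in the bimodule `M` (with left
action `l` and right action `r`):
`b(m ⊗ x₁ ⊗ ⋯ ⊗ xₙ) = m x₁ ⊗ x₂ ⊗ ⋯ + ∑ (-1)^i m ⊗ ⋯ ⊗ xᵢxᵢ₊₁ ⊗ ⋯ + (-1)^n xₙ m ⊗ x₁ ⊗ ⋯ ⊗ xₙ₋₁`. -/
def IsHochschildD {B M : Type} [Ring B] [Algebra k B] [AddCommGroup M] [Module k M]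
    (l r : B →ₗ[k] M →ₗ[k] M)
    (bd : ∀ n : ℕ, HCh k B M (n + 1) →ₗ[k] HCh k B M n) : Prop :=
  ∀ (n : ℕ) (m : M) (x : Fin (n + 1) → B),
    bd n (m ⊗ₜ[k] tp k (fun i => qbar k B (x i))) =
      r (x 0) m ⊗ₜ[k] tp k (fun i : Fin n => qbar k B (x i.succ))
      + (∑ i : Fin n, ((-1 : ℤ) ^ ((i : ℕ) + 1)) •
          (m ⊗ₜ[k] tp k (fun j => qbar k B (mulAt x i j))))
      + ((-1 : ℤ) ^ (n + 1)) •
          (l (x (Fin.last n)) m ⊗ₜ[k] tp k (fun i : Fin n => qbar k B (x i.castSucc)))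

variable (k) in
/-- The homology of a (not necessarily everywhere-defined) chain complex
`⋯ → C (n+1) → C n → ⋯ → C 0`; in degree `n+1` it is `ker (d n) / im (d (n+1))`, and in
degree `0` it is `C 0 / im (d 0)`. -/
def Hml {C : ℕ → Type} [∀ n, AddCommGroup (C n)] [∀ n, Module k (C n)]
    (d : ∀ n : ℕ, C (n + 1) →ₗ[k] C n) : ℕ → Type
  | 0 => C 0 ⧸ LinearMap.range (d 0)
  | n + 1 => LinearMap.ker (d n) ⧸
      (LinearMap.range (d (n + 1))).comap (LinearMap.ker (d n)).subtype

instance {C : ℕ → Type} [∀ n, AddCommGroup (C n)] [∀ n, Module k (C n)]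
    (d : ∀ n : ℕ, C (n + 1) →ₗ[k] C n) : ∀ n, AddCommGroup (Hml k d n)
  | 0 => inferInstanceAs (AddCommGroup (C 0 ⧸ LinearMap.range (d 0)))
  | n + 1 => inferInstanceAs (AddCommGroup (LinearMap.ker (d n) ⧸
      (LinearMap.range (d (n + 1))).comap (LinearMap.ker (d n)).subtype))

instance {C : ℕ → Type} [∀ n, AddCommGroup (C n)] [∀ n, Module k (C n)]
    (d : ∀ n : ℕ, C (n + 1) →ₗ[k] C n) : ∀ n, Module k (Hml k d n)
  | 0 => inferInstanceAs (Module k (C 0 ⧸ LinearMap.range (d 0)))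
  | n + 1 => inferInstanceAs (Module k (LinearMap.ker (d n) ⧸
      (LinearMap.range (d (n + 1))).comap (LinearMap.ker (d n)).subtype))

end Hochschild

section Conv

variable {A H : Type} [Ring A] [Algebra k A] [Ring H] [HopfAlgebra k H]

/-- `IsConvInverse f g` : `g` is the convolution inverse of `f` in the convolution
algebra `Hom_k(H ⊗ H, A)`, i.e. `f * g = g * f = ε ⊗ ε · 1_A`. -/
def IsConvInverse (f g : H →ₗ[k] H →ₗ[k] A) : Prop :=
  ∀ (h l : H) (N M' : ℕ) (u : Fin N → Fin 2 → H) (v : Fin M' → Fin 2 → H),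
    SRep k 1 h N u → SRep k 1 l M' v →
    (∑ i, ∑ j, f (u i 0) (v j 0) * g (u i 1) (v j 1)) =
        (Coalgebra.counit (R := k) h * Coalgebra.counit (R := k) l) • (1 : A) ∧
    (∑ i, ∑ j, g (u i 0) (v j 0) * f (u i 1) (v j 1)) =
        (Coalgebra.counit (R := k) h * Coalgebra.counit (R := k) l) • (1 : A)

variable {E : Type} [Ring E] [Algebra k E]

/-- The elementary term `f⁻¹(S(y), z) # S(x)` appearing in the formula for the
convolution inverse `(1 # h)⁻¹ = f⁻¹(S(h⁽²⁾), h⁽³⁾) # S(h⁽¹⁾)`. -/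
def ginv (S : CrossedProduct k A H E) (finv : H →ₗ[k] H →ₗ[k] A) (x y z : H) : E :=
  S.ι ((finv (HopfAlgebra.antipode (R := k) y) z) ⊗ₜ[k] HopfAlgebra.antipode (R := k) x)

end Conv

section Bar

variable {H : Type} [Ring H] [HopfAlgebra k H]

variable (k) in
/-- The degree-`s` part `H̄^{⊗s} ⊗ N` of the normalized bar complex computing
`H_*(H, N) = Tor_*^H(k, N)`, i.e. `(H̄^* ⊗ H, d_*) ⊗_H N`. -/
abbrev BarCh (N : Type) [AddCommGroup N] [Module k N] (s : ℕ) : Type :=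
  Tpow k (Qbar k H) s ⊗[k] N

variable (k) in
/-- `IsBarD act d` : `d` is the differential of the normalized bar complex computing the
homology `H_*(H, N)` of `H` with coefficients in the left `H`-module `N` (action `act`). -/
def IsBarD {N : Type} [AddCommGroup N] [Module k N] (act : H →ₗ[k] N →ₗ[k] N)
    (d : ∀ s : ℕ, BarCh k (H := H) N (s + 1) →ₗ[k] BarCh k (H := H) N s) : Prop :=
  ∀ (s : ℕ) (h : Fin (s + 1) → H) (n : N),
    d s (tp k (fun i => qbar k H (h i)) ⊗ₜ[k] n) =
      Coalgebra.counit (R := k) (h 0) •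
          (tp k (fun i : Fin s => qbar k H (h i.succ)) ⊗ₜ[k] n)
      + (∑ i : Fin s, ((-1 : ℤ) ^ ((i : ℕ) + 1)) •
          (tp k (fun j => qbar k H (mulAt h i j)) ⊗ₜ[k] n))
      + ((-1 : ℤ) ^ (s + 1)) •
          (tp k (fun i : Fin s => qbar k H (h i.castSucc)) ⊗ₜ[k] act (h (Fin.last s)) n)

end Bar

section Sep

variable {A : Type} [Ring A] [Algebra k A]

variable (k A) in
/-- `A` is a separable `k`-algebra: the multiplication map `A ⊗ A → A` admits an
`A`-bimodule splitting (equivalently, `A` is projective as an `A ⊗ Aᵒᵖ`-module). -/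
def IsSeparableAlg : Prop :=
  ∃ s : A →ₗ[k] A ⊗[k] A,
    (LinearMap.mul' k A) ∘ₗ s = LinearMap.id ∧
    ∀ (a b x : A), s (a * x * b) =
      TensorProduct.map (LinearMap.mulLeft k a) (LinearMap.mulRight k b) (s x)

end Sep


section Resolution

variable (k A H E : Type) [CommRing k] [Ring A] [Algebra k A] [Ring H] [HopfAlgebra k H]
  [Ring E] [Algebra k E]

/-- The `E`-bimodule `X_{rs} = E ⊗ H̄^{⊗s} ⊗ Ā^{⊗r} ⊗ E`. -/
abbrev Xc (r s : ℕ) : Type :=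
  E ⊗[k] (Tpow k (Qbar k H) s ⊗[k] (Tpow k (Qbar k A) r ⊗[k] E))

/-- The `E`-bimodule `Y_s = E ⊗ H̄^{⊗s} ⊗ H`. -/
abbrev Yc (s : ℕ) : Type := E ⊗[k] (Tpow k (Qbar k H) s ⊗[k] H)

variable {k A H E}

/-- The generator `e ⊗ h̄₁ ⊗ ⋯ ⊗ h̄ₛ ⊗ ā₁ ⊗ ⋯ ⊗ āᵣ ⊗ e'` of `X_{rs}`. -/
def xgen (e : E) {s r : ℕ} (hs : Fin s → H) (as : Fin r → A) (e' : E) : Xc k A H E r s :=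
  e ⊗ₜ[k] (tp k (fun i => qbar k H (hs i)) ⊗ₜ[k] (tp k (fun i => qbar k A (as i)) ⊗ₜ[k] e'))

/-- The generator `e ⊗ h̄₁ ⊗ ⋯ ⊗ h̄ₛ ⊗ h` of `Y_s`. -/
def ygen (e : E) {s : ℕ} (hs : Fin s → H) (h : H) : Yc k H E s :=
  e ⊗ₜ[k] (tp k (fun i => qbar k H (hs i)) ⊗ₜ[k] h)

/-- Left multiplication by `e ∈ E` on `X_{rs}`. -/
def lX (e : E) {r s : ℕ} : Xc k A H E r s →ₗ[k] Xc k A H E r s :=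
  TensorProduct.map (LinearMap.mulLeft k e) LinearMap.id

/-- Right multiplication by `e ∈ E` on `X_{rs}`. -/
def rX (e : E) {r s : ℕ} : Xc k A H E r s →ₗ[k] Xc k A H E r s :=
  TensorProduct.map LinearMap.id (TensorProduct.map LinearMap.id
    (TensorProduct.map LinearMap.id (LinearMap.mulRight k e)))

/-- Transport along equalities of indices. -/
def xcast {r r' s s' : ℕ} (hr : r = r') (hs : s = s') :
    Xc k A H E r s →ₗ[k] Xc k A H E r' s' := by
  subst hr; subst hs; exact LinearMap.id

end Resolution

section ResData

variable {k A H E : Type} [CommRing k] [Ring A] [Algebra k A] [Ring H] [HopfAlgebra k H]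
  [Ring E] [Algebra k E]

variable (k A H E) in
/-- The resolution `(X_*, d_*)` of the crossed product `E = A #_f H` of Section 1 of
the paper: the maps `μ_s`, `∂_s`, `σ⁰`, and the (higher) differentials `d^l_{rs}`
(`d⁰ = dl 0`), together with all of their defining equations.  Here
`dl l r s : X_{rs} → X_{r+l-1, s-l}`. -/
structure ResData (S : CrossedProduct k A H E) : Type where
  mu : ∀ s : ℕ, Xc k A H E 0 s →ₗ[k] Yc k H E s
  del : ∀ s : ℕ, Yc k H E (s + 1) →ₗ[k] Yc k H E s
  sig0 : ∀ s : ℕ, Yc k H E s →ₗ[k] Xc k A H E 0 s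
  sig : ∀ r s : ℕ, Xc k A H E r s →ₗ[k] Xc k A H E (r + 1) s
  dl : ∀ l r s : ℕ, Xc k A H E r s →ₗ[k] Xc k A H E (r + l - 1) (s - l)
  /-- `μ_s(a₀ ⊗ 𝐡_{0s} ⊗ a₁ ⊗ h_{s+1}) = a₀ a₁^{𝐡_{0s}⁽¹⁾} ⊗ 𝐡_{0s}⁽²⁾ ⊗ h_{s+1}`. -/
  mu_eq : ∀ (s : ℕ) (a₀ : A) (h₀ : H) (hs : Fin s → H) (b : A) (h' : H)
    (Nv : Fin (s + 1) → ℕ) (v : ∀ i, Fin (Nv i) → Fin 2 → H),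
    (∀ i, SRep k 1 ((Fin.cons h₀ hs : Fin (s + 1) → H) i) (Nv i) (v i)) →
    mu s (xgen (S.ι (a₀ ⊗ₜ[k] h₀)) hs (fun i : Fin 0 => i.elim0) (S.ι (b ⊗ₜ[k] h'))) =
      ∑ c : (∀ i, Fin (Nv i)),
        ygen (S.ι ((a₀ * iterAct k S.act (fun i => v i (c i) 0) b) ⊗ₜ[k] (v 0 (c 0) 1)))
          (fun i : Fin s => v i.succ (c i.succ) 1) h'
  /-- `d⁰_{rs}` is the Hochschild-type boundary in the `A`-direction. -/
  d0_eq : ∀ (r s : ℕ) (a₀ : A) (h₀ : H) (hs : Fin s → H) (as : Fin (r + 1) → A)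
    (b : A) (h' : H) (Nv : Fin (s + 1) → ℕ) (v : ∀ i, Fin (Nv i) → Fin 2 → H),
    (∀ i, SRep k 1 ((Fin.cons h₀ hs : Fin (s + 1) → H) i) (Nv i) (v i)) →
    dl 0 (r + 1) s (xgen (S.ι (a₀ ⊗ₜ[k] h₀)) hs as (S.ι (b ⊗ₜ[k] h'))) =
      (∑ c : (∀ i, Fin (Nv i)),
        xgen (S.ι ((a₀ * iterAct k S.act (fun i => v i (c i) 0) (as 0)) ⊗ₜ[k] (v 0 (c 0) 1)))
          (fun i : Fin s => v i.succ (c i.succ) 1)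
          (fun i : Fin r => as i.succ) (S.ι (b ⊗ₜ[k] h')))
      + (∑ i : Fin r, ((-1 : ℤ) ^ ((i : ℕ) + 1)) •
          xgen (S.ι (a₀ ⊗ₜ[k] h₀)) hs (mulAt as i) (S.ι (b ⊗ₜ[k] h')))
      + ((-1 : ℤ) ^ (r + 1)) •
          xgen (S.ι (a₀ ⊗ₜ[k] h₀)) hs (fun i : Fin r => as i.castSucc)
            (S.ι ((as (Fin.last r) * b) ⊗ₜ[k] h'))
  /-- `∂_s(a ⊗ 𝐡) = ∑ᵢ (-1)^{i+1} a f(hᵢ⁽¹⁾, hᵢ₊₁⁽¹⁾)^{𝐡_{0,i-1}⁽¹⁾} ⊗ 𝐡_{0,i-1}⁽²⁾ ⊗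
  hᵢ⁽²⁾hᵢ₊₁⁽²⁾ ⊗ 𝐡_{i+2,s+1}`. -/
  del_eq : ∀ (s : ℕ) (a : A) (h₀ : H) (hs : Fin (s + 1) → H) (h' : H)
    (Nv : Fin (s + 3) → ℕ) (v : ∀ i, Fin (Nv i) → Fin 2 → H),
    (∀ i, SRep k 1 ((Fin.cons h₀ (Fin.snoc hs h') : Fin (s + 3) → H) i) (Nv i) (v i)) →
    del s (ygen (S.ι (a ⊗ₜ[k] h₀)) hs h') =
      ∑ i : Fin (s + 2), ((-1 : ℤ) ^ ((i : ℕ) + 1)) •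
        (∑ c : (∀ j : Fin ((i : ℕ) + 2),
            Fin (Nv ⟨(j : ℕ), by have := j.isLt; have := i.isLt; omega⟩)),
          ygen
            (S.ι ((a * iterAct k S.act
                (fun j : Fin (i : ℕ) =>
                  v ⟨(j : ℕ), by have := j.isLt; have := i.isLt; omega⟩
                    (c ⟨(j : ℕ), by have := j.isLt; have := i.isLt; omega⟩) 0)
                (S.f (v ⟨(i : ℕ), by have := i.isLt; omega⟩
                        (c ⟨(i : ℕ), by omega⟩) 0)
                     (v ⟨(i : ℕ) + 1, by have := i.isLt; omega⟩
                        (c ⟨(i : ℕ) + 1, by omega⟩) 0))) ⊗ₜ[k]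
              (if (i : ℕ) = 0 then
                  (v ⟨0, by omega⟩ (c ⟨0, by omega⟩) 1) * (v ⟨1, by omega⟩ (c ⟨1, by omega⟩) 1)
                else v ⟨0, by omega⟩ (c ⟨0, by omega⟩) 1)))
            (fun p : Fin s =>
              if hp : (p : ℕ) + 1 < (i : ℕ) then
                v ⟨(p : ℕ) + 1, by have := p.isLt; have := i.isLt; omega⟩
                  (c ⟨(p : ℕ) + 1, by omega⟩) 1
              else if hp' : (p : ℕ) + 1 = (i : ℕ) then
                (v ⟨(p : ℕ) + 1, by have := p.isLt; omega⟩ (c ⟨(p : ℕ) + 1, by omega⟩) 1) *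
                  (v ⟨(p : ℕ) + 2, by have := p.isLt; have := i.isLt; omega⟩
                    (c ⟨(p : ℕ) + 2, by omega⟩) 1)
              else (Fin.cons h₀ (Fin.snoc hs h') : Fin (s + 3) → H) ⟨(p : ℕ) + 2, by have := p.isLt; omega⟩)
            (if hi : (i : ℕ) = s + 1 then
                (v ⟨s + 1, by omega⟩ (c ⟨s + 1, by omega⟩) 1) *
                  (v ⟨s + 2, by omega⟩ (c ⟨s + 2, by omega⟩) 1)
              else (Fin.cons h₀ (Fin.snoc hs h') : Fin (s + 3) → H) ⟨s + 2, by omega⟩))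
  /-- `σ⁰_{0,s}(a₀ ⊗ 𝐡 ⊗ h_{s+1}) = a₀ ⊗ 𝐡 ⊗ 1 # h_{s+1}`. -/
  sig0_eq : ∀ (s : ℕ) (e : E) (hs : Fin s → H) (h : H),
    sig0 s (ygen e hs h) = xgen e hs (fun i : Fin 0 => i.elim0) (S.hE h)
  /-- `σ⁰_{r+1,s}(a₀ ⊗ 𝐡 ⊗ 𝐚 ⊗ a # h) = (-1)^{r+1} a₀ ⊗ 𝐡 ⊗ 𝐚 ⊗ ā ⊗ 1 # h`. -/
  sig_eq : ∀ (r s : ℕ) (e : E) (hs : Fin s → H) (as : Fin r → A) (b : A) (h' : H),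
    sig r s (xgen e hs as (S.ι (b ⊗ₜ[k] h'))) =
      ((-1 : ℤ) ^ (r + 1)) • xgen e hs (Fin.snoc as b) (S.hE h')
  /-- `d¹_{0s} = -σ⁰ ∘ ∂ ∘ μ` on `k ⊗ H̄^s ⊗ k`. -/
  dl_one_zero : ∀ (s : ℕ) (hs : Fin (s + 1) → H),
    dl 1 0 (s + 1) (xgen (1 : E) hs (fun i : Fin 0 => i.elim0) (1 : E)) =
      - sig0 s (del s (mu (s + 1) (xgen (1 : E) hs (fun i : Fin 0 => i.elim0) (1 : E))))
  /-- `d^l_{0s} = -∑_{j=1}^{l-1} σ⁰ ∘ d^{l-j} ∘ d^j` on `k ⊗ H̄^s ⊗ k`, for `1 < l ≤ s`. -/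
  dl_zero : ∀ (l s : ℕ) (hl : 2 ≤ l) (hls : l ≤ s) (hs : Fin s → H),
    dl l 0 s (xgen (1 : E) hs (fun i : Fin 0 => i.elim0) (1 : E)) =
      - ∑ j : Fin (l - 1),
        xcast (show (l - 2) + 1 = 0 + l - 1 by omega) rfl
          (sig (l - 2) (s - l)
            (xcast
              (show (j : ℕ) + (l - ((j : ℕ) + 1)) - 1 = l - 2 by
                have := j.isLt; omega)
              (show (s - ((j : ℕ) + 1)) - (l - ((j : ℕ) + 1)) = s - l by
                have := j.isLt; omega)
              (dl (l - ((j : ℕ) + 1)) ((j : ℕ)) (s - ((j : ℕ) + 1))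
                (xcast (show 0 + ((j : ℕ) + 1) - 1 = (j : ℕ) by omega) rfl
                  (dl ((j : ℕ) + 1) 0 s
                    (xgen (1 : E) hs (fun i : Fin 0 => i.elim0) (1 : E)))))))
  /-- `d^l_{rs} = -∑_{j=0}^{l-1} σ⁰ ∘ d^{l-j} ∘ d^j` on `k ⊗ H̄^s ⊗ Ā^r ⊗ k`, for `r > 0`,
  `1 ≤ l ≤ s`. -/
  dl_succ : ∀ (l r s : ℕ) (hl : 1 ≤ l) (hls : l ≤ s) (hs : Fin s → H) (as : Fin (r + 1) → A),
    dl l (r + 1) s (xgen (1 : E) hs as (1 : E)) =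
      - ∑ j : Fin l,
        xcast (show (r + l - 1) + 1 = (r + 1) + l - 1 by omega) rfl
          (sig (r + l - 1) (s - l)
            (xcast
              (show (r + (j : ℕ)) + (l - (j : ℕ)) - 1 = r + l - 1 by
                have := j.isLt; omega)
              (show (s - (j : ℕ)) - (l - (j : ℕ)) = s - l by
                have := j.isLt; omega)
              (dl (l - (j : ℕ)) (r + (j : ℕ)) (s - (j : ℕ))
                (xcast (show (r + 1) + (j : ℕ) - 1 = r + (j : ℕ) by omega) rfl
                  (dl (j : ℕ) (r + 1) s (xgen (1 : E) hs as (1 : E)))))))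
  /-- Each `d^l_{rs}` is a map of `E`-bimodules. -/
  dl_lmul : ∀ (l r s : ℕ) (e : E), dl l r s ∘ₗ lX e = lX e ∘ₗ dl l r s
  dl_rmul : ∀ (l r s : ℕ) (e : E), dl l r s ∘ₗ rX e = rX e ∘ₗ dl l r s

end ResData

section Xtot

variable {k A H E : Type} [CommRing k] [Ring A] [Algebra k A] [Ring H] [HopfAlgebra k H]
  [Ring E] [Algebra k E]

variable (k A H E) in
/-- The total module `X_n = ⊕_{r+s=n} X_{rs}`. -/
abbrev XT (n : ℕ) : Type :=
  ⨁ (s : Fin (n + 1)), Xc k A H E (n - (s : ℕ)) (s : ℕ)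

/-- The total differential `d_n = ∑_{r+s=n, r+l>0} ∑_{l=0}^{s} d^l_{rs}`. -/
noncomputable def dT {S : CrossedProduct k A H E} (R : ResData k A H E S) (n : ℕ) :
    XT k A H E (n + 1) →ₗ[k] XT k A H E n :=
  DirectSum.toModule k (Fin (n + 2)) (XT k A H E n) (fun s =>
    ∑ l : Fin ((s : ℕ) + 1),
      if h : 0 < (n + 1 - (s : ℕ)) + (l : ℕ) then
        (DirectSum.lof k (Fin (n + 1)) (fun s' : Fin (n + 1) => Xc k A H E (n - (s' : ℕ)) (s' : ℕ))
            ⟨(s : ℕ) - (l : ℕ), by have := s.isLt; have := l.isLt; omega⟩) ∘ₗ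
          xcast
            (show (n + 1 - (s : ℕ)) + (l : ℕ) - 1 = n - ((s : ℕ) - (l : ℕ)) by
              have := s.isLt; have := l.isLt; omega)
            rfl ∘ₗ
          R.dl (l : ℕ) (n + 1 - (s : ℕ)) (s : ℕ)
      else 0)

/-- Left multiplication by `e ∈ E` on `X_n`. -/
noncomputable def lT (e : E) (n : ℕ) : XT k A H E n →ₗ[k] XT k A H E n :=
  DirectSum.toModule k (Fin (n + 1)) (XT k A H E n) (fun s =>
    (DirectSum.lof k (Fin (n + 1)) (fun s' : Fin (n + 1) => Xc k A H E (n - (s' : ℕ)) (s' : ℕ)) s)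
      ∘ₗ lX e)

/-- Right multiplication by `e ∈ E` on `X_n`. -/
noncomputable def rT (e : E) (n : ℕ) : XT k A H E n →ₗ[k] XT k A H E n :=
  DirectSum.toModule k (Fin (n + 1)) (XT k A H E n) (fun s =>
    (DirectSum.lof k (Fin (n + 1)) (fun s' : Fin (n + 1) => Xc k A H E (n - (s' : ℕ)) (s' : ℕ)) s)
      ∘ₗ rX e)

/-- The augmentation `X_0 → E` induced by a map `μ : X_{00} → E`. -/
noncomputable def multT (mult : Xc k A H E 0 0 →ₗ[k] E) : XT k A H E 0 →ₗ[k] E :=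
  DirectSum.toModule k (Fin 1) E (fun s =>
    mult ∘ₗ xcast (show 0 - (s : ℕ) = 0 by have := s.isLt; omega)
      (show (s : ℕ) = 0 by have := s.isLt; omega))

end Xtot

section Statement2

variable {k A H E : Type} [CommRing k] [Ring A] [Algebra k A] [Ring H] [HopfAlgebra k H]
  [Ring E] [Algebra k E]

/-- Left multiplication by `e ∈ E` on `Y_s`. -/
noncomputable def lY (e : E) {s : ℕ} : Yc k H E s →ₗ[k] Yc k H E s :=
  TensorProduct.map (LinearMap.mulLeft k e) LinearMap.id

/-- The map `μ'_n : X_n → Y_n` which is `μ_n` on `X_{0n}` and `0` on `X_{r,n-r}`, `r > 0`. -/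
noncomputable def muT {S : CrossedProduct k A H E} (R : ResData k A H E S) (n : ℕ) :
    XT k A H E n →ₗ[k] Yc k H E n :=
  DirectSum.toModule k (Fin (n + 1)) (Yc k H E n) (fun s =>
    if h : (s : ℕ) = n then
      R.mu n ∘ₗ xcast (show n - (s : ℕ) = 0 by omega) h
    else 0)

/-- `σ̄₀ = σ⁰₀₀ ∘ σ⁻¹₀`. -/
noncomputable def sbar0 {S : CrossedProduct k A H E} (R : ResData k A H E S)
    (σm : E →ₗ[k] Yc k H E 0) : E →ₗ[k] XT k A H E 0 :=
  (DirectSum.lof k (Fin 1) (fun s' : Fin 1 => Xc k A H E (0 - (s' : ℕ)) (s' : ℕ)) 0) ∘ₗ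
    R.sig0 0 ∘ₗ σm

/-- `σ̄_{n+1} = -∑_{l=0}^{n+1} σ^l_{l,n-l+1} ∘ σ⁻¹_{n+1} ∘ μ_n + ∑_{r+s=n} ∑_{l=0}^s
σ^l_{r+l+1,s-l}`. -/
noncomputable def sbar {S : CrossedProduct k A H E} (R : ResData k A H E S)
    (slY : ∀ l s : ℕ, Yc k H E s →ₗ[k] Xc k A H E l (s - l))
    (slX : ∀ l r s : ℕ, Xc k A H E r s →ₗ[k] Xc k A H E (r + l + 1) (s - l))
    (sY : ∀ s : ℕ, Yc k H E s →ₗ[k] Yc k H E (s + 1)) (n : ℕ) :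
    XT k A H E n →ₗ[k] XT k A H E (n + 1) :=
  - ((∑ l : Fin (n + 2),
      (DirectSum.lof k (Fin (n + 2)) (fun s' : Fin (n + 2) => Xc k A H E (n + 1 - (s' : ℕ)) (s' : ℕ))
          ⟨n + 1 - (l : ℕ), by omega⟩) ∘ₗ
        xcast (show (l : ℕ) = n + 1 - (n + 1 - (l : ℕ)) by have := l.isLt; omega) rfl ∘ₗ
        slY (l : ℕ) (n + 1)) ∘ₗ sY n ∘ₗ muT R n)
  + DirectSum.toModule k (Fin (n + 1)) (XT k A H E (n + 1)) (fun s =>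
      ∑ l : Fin ((s : ℕ) + 1),
        (DirectSum.lof k (Fin (n + 2)) (fun s' : Fin (n + 2) => Xc k A H E (n + 1 - (s' : ℕ)) (s' : ℕ))
            ⟨(s : ℕ) - (l : ℕ), by have := s.isLt; have := l.isLt; omega⟩) ∘ₗ
          xcast
            (show (n - (s : ℕ)) + (l : ℕ) + 1 = n + 1 - ((s : ℕ) - (l : ℕ)) by
              have := s.isLt; have := l.isLt; omega)
            rfl ∘ₗ
          slX (l : ℕ) (n - (s : ℕ)) (s : ℕ))


end Statement2

section AuxT
variable {k : Type} [CommRing k] {V : Type} [AddCommGroup V] [Module k V]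
  {M : Type} [AddCommGroup M] [Module k M]

variable (k V) in
def tsucc (n : ℕ) : (V ⊗[k] Tpow k V n) ≃ₗ[k] Tpow k V (n + 1) := LinearEquiv.refl k _

variable (k V) in
def tzero : k ≃ₗ[k] Tpow k V 0 := LinearEquiv.refl k _

theorem tp_zero (v : Fin 0 → V) : tp k v = tzero k V 1 := rfl

theorem tp_succ {n : ℕ} (v : Fin (n + 1) → V) :
    tp k v = tsucc k V n (v 0 ⊗ₜ[k] tp k (fun i => v i.succ)) := rfl

theorem tp_cons {n : ℕ} (x : V) (v : Fin n → V) :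
    tp k (Fin.cons x v : Fin (n + 1) → V) = tsucc k V n (x ⊗ₜ[k] tp k v) := rfl

theorem tpow_ext : ∀ (n : ℕ) {M : Type} [AddCommGroup M] [Module k M]
    (f g : Tpow k V n →ₗ[k] M), (∀ v : Fin n → V, f (tp k v) = g (tp k v)) → f = g
  | 0, M, _, _, f, g, h => by
      have : f ∘ₗ (tzero k V).toLinearMap = g ∘ₗ (tzero k V).toLinearMap := by
        apply LinearMap.ext_ring
        exact h (fun i => i.elim0)
      refine LinearMap.ext fun x => ?_
      obtain ⟨y, rfl⟩ := (tzero k V).surjective x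
      exact LinearMap.congr_fun this y
  | n + 1, M, _, _, f, g, h => by
      have : f ∘ₗ (tsucc k V n).toLinearMap = g ∘ₗ (tsucc k V n).toLinearMap := by
        apply TensorProduct.ext
        apply LinearMap.ext
        intro x
        apply tpow_ext n
        intro v
        exact h (Fin.cons x v)
      refine LinearMap.ext fun x => ?_
      obtain ⟨y, rfl⟩ := (tsucc k V n).surjective x
      exact LinearMap.congr_fun this y

theorem tp_sum_exists : ∀ (n : ℕ) (t : Tpow k V (n + 1)),
    ∃ (N : ℕ) (u : Fin N → Fin (n + 1) → V), t = ∑ i, tp k (u i) := by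
  intro n
  induction n with
  | zero =>
    intro t
    obtain ⟨t, rfl⟩ := (tsucc k V 0).surjective t
    induction t using TensorProduct.induction_on with
    | zero => exact ⟨0, fun i => i.elim0, by simp⟩
    | add x y hx hy =>
      obtain ⟨N, u, hu⟩ := hx
      obtain ⟨N', u', hu'⟩ := hy
      refine ⟨N + N', Fin.append u u', ?_⟩
      rw [map_add, hu, hu', Fin.sum_univ_add]
      simp
    | tmul x c =>
      obtain ⟨c, rfl⟩ := (tzero k V).surjective c
      refine ⟨1, fun _ _ => c • x, ?_⟩
      rw [Fin.sum_univ_one, tp_succ, tp_zero]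
      have : tzero k V c = c • tzero k V 1 := by rw [← map_smul]; simp
      rw [this, TensorProduct.tmul_smul, TensorProduct.smul_tmul']
  | succ n ih =>
    intro t
    obtain ⟨t, rfl⟩ := (tsucc k V (n + 1)).surjective t
    induction t using TensorProduct.induction_on with
    | zero => exact ⟨0, fun i => i.elim0, by simp⟩
    | add x y hx hy =>
      obtain ⟨N, u, hu⟩ := hx
      obtain ⟨N', u', hu'⟩ := hy
      refine ⟨N + N', Fin.append u u', ?_⟩
      rw [map_add, hu, hu', Fin.sum_univ_add]
      simp
    | tmul x w =>
      obtain ⟨N, u, rfl⟩ := ih w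
      refine ⟨N, fun i => Fin.cons x (u i), ?_⟩
      simp only [tp_cons]
      rw [TensorProduct.tmul_sum, map_sum]

theorem srep_exists {H : Type} [AddCommGroup H] [Module k H] [Coalgebra k H] (n : ℕ) (h : H) :
    ∃ (N : ℕ) (u : Fin N → Fin (n + 1) → H), SRep k n h N u :=
  tp_sum_exists n _

/-- evaluation of a bilinear map on `Tpow 2`. -/
def ev2 (F : V →ₗ[k] V →ₗ[k] M) : Tpow k V 2 →ₗ[k] M :=
  TensorProduct.lift F ∘ₗ
    TensorProduct.map LinearMap.id ((TensorProduct.rid k V).toLinearMap ∘ₗ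
      TensorProduct.map LinearMap.id (tzero k V).symm.toLinearMap ∘ₗ (tsucc k V 0).symm.toLinearMap)
    ∘ₗ (tsucc k V 1).symm.toLinearMap

theorem ev2_tp (F : V →ₗ[k] V →ₗ[k] M) (v : Fin 2 → V) : ev2 F (tp k v) = F (v 0) (v 1) := by
  rw [tp_succ, tp_succ, tp_zero]
  simp [ev2]

theorem srep_ev2 {H : Type} [AddCommGroup H] [Module k H] [Coalgebra k H]
    (F : H →ₗ[k] H →ₗ[k] M) {h : H} {N : ℕ} {u : Fin N → Fin 2 → H} (hu : SRep k 1 h N u) :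
    ∑ i, F (u i 0) (u i 1) = TensorProduct.lift F (Coalgebra.comul (R := k) h) := by
  have : ∑ i, F (u i 0) (u i 1) = ev2 F (itComul k 1 h) := by
    rw [hu, map_sum]; simp only [ev2_tp]
  rw [this]
  have h2 : ev2 F ∘ₗ (tsucc k H 1).toLinearMap ∘ₗ
      TensorProduct.map LinearMap.id (itComul k 0) = TensorProduct.lift F := by
    apply TensorProduct.ext'
    intro x y
    have : itComul k 0 y = tsucc k H 0 (y ⊗ₜ[k] tzero k H 1) := rfl
    simp [ev2, this]
  exact LinearMap.congr_fun h2 _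

theorem srep_ev1 {H : Type} [AddCommGroup H] [Module k H] [Coalgebra k H]
    {h : H} {N : ℕ} {u : Fin N → Fin 2 → H} (hu : SRep k 1 h N u) :
    ∑ i, Coalgebra.counit (R := k) (u i 0) • (u i 1) = h := by
  have := srep_ev2 ((LinearMap.lsmul k H) ∘ₗ (Coalgebra.counit (R := k) (A := H))) hu
  simp only [LinearMap.comp_apply, LinearMap.lsmul_apply] at this
  rw [this]
  have h3 := Coalgebra.rTensor_counit_comul (R := k) h
  apply_fun (TensorProduct.lid k H) at h3
  simp only [TensorProduct.lid_tmul, one_smul] at h3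
  conv_rhs => rw [← h3]
  generalize Coalgebra.comul (R := k) h = t
  induction t using TensorProduct.induction_on with
  | zero => simp
  | add x y hx hy => simp only [map_add, hx, hy]
  | tmul x y => simp

/-- contraction of the first entry with the counit -/
def ctr (H : Type) [AddCommGroup H] [Module k H] [Coalgebra k H] (n : ℕ) :
    Tpow k H (n + 1) →ₗ[k] Tpow k H n :=
  TensorProduct.lift ((LinearMap.lsmul k _) ∘ₗ (Coalgebra.counit (R := k) (A := H))) ∘ₗ
    (tsucc k H n).symm.toLinearMap

theorem ctr_tp {H : Type} [AddCommGroup H] [Module k H] [Coalgebra k H] (n : ℕ)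
    (v : Fin (n + 1) → H) :
    ctr H n (tp k v) = Coalgebra.counit (R := k) (v 0) • tp k (fun i => v i.succ) := by
  rw [tp_succ]; simp [ctr]

theorem ctr_itComul {H : Type} [AddCommGroup H] [Module k H] [Coalgebra k H] (n : ℕ) (h : H) :
    ctr H (n + 1) (itComul k (n + 1) h) = itComul k n h := by
  have h2 : (ctr H (n + 1) ∘ₗ (tsucc k H (n + 1)).toLinearMap ∘ₗ
      TensorProduct.map LinearMap.id (itComul k n)) =
      itComul k n ∘ₗ (TensorProduct.lid k H).toLinearMap ∘ₗ
        TensorProduct.map (Coalgebra.counit (R := k) (A := H)) LinearMap.id := by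
    apply TensorProduct.ext'
    intro x y
    simp [ctr]
  have h4 := LinearMap.congr_fun h2 (Coalgebra.comul (R := k) h)
  have h3 := Coalgebra.rTensor_counit_comul (R := k) h
  refine Eq.trans h4 ?_
  simp only [LinearMap.comp_apply]
  rw [LinearMap.rTensor] at h3
  rw [h3]
  simp

/-- the 3-fold representation with the middle entry contracted. -/
theorem srep_mid {H : Type} [AddCommGroup H] [Module k H] [Coalgebra k H]
    (F : H →ₗ[k] H →ₗ[k] M) {h : H} {N N' : ℕ} {u : Fin N → Fin 2 → H}
    {u' : Fin N' → Fin 3 → H} (hu : SRep k 1 h N u) (hu' : SRep k 2 h N' u') :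
    ∑ i, Coalgebra.counit (R := k) (u' i 1) • F (u' i 0) (u' i 2) = ∑ i, F (u i 0) (u i 1) := by
  have e1 : ∑ i, F (u i 0) (u i 1) = ev2 F (itComul k 1 h) := by
    rw [hu, map_sum]; simp only [ev2_tp]
  have e2 : itComul k 1 h = ((tsucc k H 1).toLinearMap ∘ₗ TensorProduct.map LinearMap.id (ctr H 1)
      ∘ₗ (tsucc k H 2).symm.toLinearMap) (itComul k 2 h) := by
    have : (itComul k 2 h) = (tsucc k H 2).toLinearMap
      (TensorProduct.map LinearMap.id (itComul k 1) (Coalgebra.comul (R := k) h)) := rfl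
    rw [this]
    have h3 : (itComul k 1 h) = (tsucc k H 1).toLinearMap
      (TensorProduct.map LinearMap.id (itComul k 0) (Coalgebra.comul (R := k) h)) := rfl
    rw [h3]
    simp only [LinearMap.comp_apply, LinearEquiv.coe_coe, LinearEquiv.symm_apply_apply]
    congr 1
    generalize Coalgebra.comul (R := k) h = t
    induction t using TensorProduct.induction_on with
    | zero => simp
    | add x y hx hy => simp only [map_add, hx, hy]
    | tmul x y => simp [ctr_itComul]
  rw [e1, e2, hu', map_sum, map_sum]
  refine Finset.sum_congr rfl fun i _ => ?_
  rw [tp_succ]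
  simp only [LinearMap.comp_apply, LinearEquiv.coe_coe, LinearEquiv.symm_apply_apply,
    TensorProduct.map_tmul, LinearMap.id_apply]
  rw [ctr_tp, TensorProduct.tmul_smul, map_smul, map_smul]
  congr 1
  exact (ev2_tp F (![u' i 0, u' i 2])).symm

theorem srep_first {H : Type} [AddCommGroup H] [Module k H] [Coalgebra k H]
    (F : H →ₗ[k] H →ₗ[k] M) {h : H} {N N' : ℕ} {u : Fin N → Fin 2 → H}
    {u' : Fin N' → Fin 3 → H} (hu : SRep k 1 h N u) (hu' : SRep k 2 h N' u') :
    ∑ i, Coalgebra.counit (R := k) (u' i 0) • F (u' i 1) (u' i 2) = ∑ i, F (u i 0) (u i 1) := by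
  have e1 : ∑ i, F (u i 0) (u i 1) = ev2 F (itComul k 1 h) := by
    rw [hu, map_sum]; simp only [ev2_tp]
  rw [e1, ← ctr_itComul, hu', map_sum, map_sum]
  refine Finset.sum_congr rfl fun i _ => ?_
  rw [ctr_tp, map_smul, ev2_tp]
  rfl

end AuxT

section AuxE
variable {k A H E : Type} [CommRing k] [Ring A] [Algebra k A] [Ring H] [HopfAlgebra k H]
  [Ring E] [Algebra k E] (S : CrossedProduct k A H E)

theorem srep_one (n : ℕ) : SRep k n (1 : H) 1 (fun _ _ => 1) := by
  unfold SRep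
  rw [Fin.sum_univ_one]
  induction n with
  | zero => rfl
  | succ n ih =>
    have : itComul k (n + 1) (1 : H) = (tsucc k H (n + 1)).toLinearMap
      (TensorProduct.map LinearMap.id (itComul k n) (Coalgebra.comul (R := k) (1 : H))) := rfl
    rw [this, Bialgebra.comul_one, Algebra.TensorProduct.one_def, TensorProduct.map_tmul, ih]
    rfl

theorem aE_apply (a : A) : S.aE a = S.ι (a ⊗ₜ[k] 1) := rfl
theorem hE_apply (h : H) : S.hE h = S.ι (1 ⊗ₜ[k] h) := rfl
theorem aE_one : S.aE (1 : A) = 1 := S.ι_one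
theorem hE_one : S.hE (1 : H) = 1 := S.ι_one

theorem aE_mul_ι (a b : A) (l : H) : S.aE a * S.ι (b ⊗ₜ[k] l) = S.ι ((a * b) ⊗ₜ[k] l) := by
  obtain ⟨M, v, hv⟩ := srep_exists (k := k) 1 l
  rw [aE_apply, S.ι_mul a b 1 l 1 M (fun _ _ => 1) v (srep_one 2) hv, Fin.sum_univ_one]
  simp only [S.one_act, (S.f_normal _).2, one_mul]
  conv_rhs => rw [← srep_ev1 hv]
  rw [TensorProduct.tmul_sum, map_sum]
  refine Finset.sum_congr rfl fun i _ => ?_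
  rw [mul_smul_comm, mul_one, TensorProduct.smul_tmul]

theorem aE_mul (a b : A) : S.aE (a * b) = S.aE a * S.aE b := by
  rw [aE_apply S b, aE_mul_ι]; rfl

theorem ι_eq (a : A) (h : H) : S.ι (a ⊗ₜ[k] h) = S.aE a * S.hE h := by
  rw [hE_apply, aE_mul_ι, mul_one]

theorem ι_mul_aE (a b : A) (h : H) (N : ℕ) (u : Fin N → Fin 2 → H) (hu : SRep k 1 h N u) :
    S.ι (a ⊗ₜ[k] h) * S.aE b = ∑ i, S.ι ((a * S.act (u i 0) b) ⊗ₜ[k] (u i 1)) := by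
  obtain ⟨N', u', hu'⟩ := srep_exists (k := k) 2 h
  rw [aE_apply, S.ι_mul a b h 1 N' 1 u' (fun _ _ => 1) hu' (srep_one 1)]
  simp only [Fin.sum_univ_one, (S.f_normal _).1, mul_one]
  have := srep_mid (k := k) (((TensorProduct.mk k A H).compr₂ S.ι.toLinearMap) ∘ₗ
    (LinearMap.mulLeft k a) ∘ₗ (S.act.flip b)) hu hu'
  simp only [LinearMap.comp_apply, LinearMap.compr₂_apply, LinearMap.mulLeft_apply,
    LinearMap.flip_apply, TensorProduct.mk_apply, LinearEquiv.coe_coe] at this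
  rw [← this]
  refine Finset.sum_congr rfl fun i _ => ?_
  rw [mul_smul_comm, mul_one, ← TensorProduct.smul_tmul', map_smul]

theorem ι_mul_hE (a : A) (h l : H) (N M : ℕ) (u : Fin N → Fin 2 → H) (v : Fin M → Fin 2 → H)
    (hu : SRep k 1 h N u) (hv : SRep k 1 l M v) :
    S.ι (a ⊗ₜ[k] h) * S.hE l =
      ∑ i, ∑ j, S.ι ((a * S.f (u i 0) (v j 0)) ⊗ₜ[k] (u i 1 * v j 1)) := by
  obtain ⟨N', u', hu'⟩ := srep_exists (k := k) 2 h
  rw [hE_apply, S.ι_mul a 1 h l N' M u' v hu' hv, Finset.sum_comm]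
  rw [Finset.sum_comm (γ := Fin N)]
  refine Finset.sum_congr rfl fun j _ => ?_
  have := srep_first (k := k) ((((TensorProduct.mk k A H).compr₂ S.ι.toLinearMap) ∘ₗ
    (LinearMap.mulLeft k a) ∘ₗ (S.f.flip (v j 0))).compl₂ (LinearMap.mulRight k (v j 1))) hu hu'
  simp only [LinearMap.comp_apply, LinearMap.compr₂_apply, LinearMap.mulLeft_apply,
    LinearMap.flip_apply, TensorProduct.mk_apply, LinearEquiv.coe_coe, LinearMap.compl₂_apply,
    LinearMap.mulRight_apply] at this
  rw [← this]
  refine Finset.sum_congr rfl fun i _ => ?_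
  rw [S.act_one, mul_smul_comm, mul_one, smul_mul_assoc, ← TensorProduct.smul_tmul', map_smul]

theorem E_ind {P : E → Prop} (h0 : P 0) (hadd : ∀ x y, P x → P y → P (x + y))
    (hι : ∀ a h, P (S.ι (a ⊗ₜ[k] h))) (x : E) : P x := by
  obtain ⟨t, rfl⟩ := S.ι.surjective x
  induction t using TensorProduct.induction_on with
  | zero => simpa using h0
  | add x y hx hy => rw [map_add]; exact hadd _ _ hx hy
  | tmul a h => exact hι a h

end AuxE

section AuxN
variable {k A H E : Type} [CommRing k] [Ring A] [Algebra k A] [Ring H] [HopfAlgebra k H]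
  [Ring E] [Algebra k E] (S : CrossedProduct k A H E)

variable (k H E) in
/-- `N_n = E ⊗ H^{⊗ n}`, a model for the `(n+1)`-fold tensor power of `E` over `A`. -/
abbrev Nc (n : ℕ) : Type := E ⊗[k] Tpow k H n

def lN (e : E) {n : ℕ} : Nc k H E n →ₗ[k] Nc k H E n :=
  TensorProduct.map (LinearMap.mulLeft k e) LinearMap.id

theorem lN_tmul (e e' : E) {n : ℕ} (w : Tpow k H n) :
    lN e (e' ⊗ₜ[k] w) = (e * e') ⊗ₜ[k] w := rfl

theorem lN_lN (e e' : E) {n : ℕ} (y : Nc k H E n) : lN e (lN e' y) = lN (e * e') y := by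
  induction y using TensorProduct.induction_on with
  | zero => simp
  | add x y hx hy => simp only [map_add, hx, hy]
  | tmul x w => simp only [lN_tmul, mul_assoc]

/-- `e ⊗ y ↦ e ⊗_A y`. -/
def triU (n : ℕ) : E ⊗[k] Nc k H E n →ₗ[k] Nc k H E (n + 1) :=
  TensorProduct.map (LinearMap.mul' k E ∘ₗ TensorProduct.map LinearMap.id S.aE)
      (tsucc k H n).toLinearMap ∘ₗ
    (TensorProduct.assoc k E A (H ⊗[k] Tpow k H n)).symm.toLinearMap ∘ₗ
    TensorProduct.map LinearMap.id ((TensorProduct.assoc k A H (Tpow k H n)).toLinearMap ∘ₗ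
      TensorProduct.map S.ι.symm.toLinearMap LinearMap.id)

theorem triU_ι (n : ℕ) (e : E) (a : A) (h : H) (w : Tpow k H n) :
    triU S n (e ⊗ₜ[k] (S.ι (a ⊗ₜ[k] h) ⊗ₜ[k] w)) = (e * S.aE a) ⊗ₜ[k] tsucc k H n (h ⊗ₜ[k] w) := by
  simp [triU]

theorem triU_hE (n : ℕ) (e : E) (h : H) (w : Tpow k H n) :
    triU S n (e ⊗ₜ[k] (S.hE h ⊗ₜ[k] w)) = e ⊗ₜ[k] tsucc k H n (h ⊗ₜ[k] w) := by
  rw [hE_apply, triU_ι, aE_one, mul_one]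

theorem N_ind {n : ℕ} {P : Nc k H E n → Prop} (h0 : P 0) (hadd : ∀ x y, P x → P y → P (x + y))
    (hι : ∀ a h w, P (S.ι (a ⊗ₜ[k] h) ⊗ₜ[k] w)) (y : Nc k H E n) : P y := by
  induction y using TensorProduct.induction_on with
  | zero => exact h0
  | add x y hx hy => exact hadd _ _ hx hy
  | tmul x w =>
    induction x using E_ind S with
    | h0 => rw [TensorProduct.zero_tmul]; exact h0
    | hadd x y hx hy => rw [TensorProduct.add_tmul]; exact hadd _ _ hx hy
    | hι a h => exact hι a h w

theorem lN_triU (n : ℕ) (e e' : E) (y : Nc k H E n) :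
    lN e (triU S n (e' ⊗ₜ[k] y)) = triU S n ((e * e') ⊗ₜ[k] y) := by
  induction y using N_ind S with
  | h0 => simp
  | hadd x y hx hy => simp only [TensorProduct.tmul_add, map_add, hx, hy]
  | hι a h w => rw [triU_ι, triU_ι, lN_tmul, mul_assoc]

theorem triU_aE (n : ℕ) (e : E) (a : A) (y : Nc k H E n) :
    triU S n ((e * S.aE a) ⊗ₜ[k] y) = triU S n (e ⊗ₜ[k] lN (S.aE a) y) := by
  induction y using N_ind S with
  | h0 => simp
  | hadd x y hx hy => simp only [TensorProduct.tmul_add, map_add, hx, hy]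
  | hι b h w => rw [triU_ι, lN_tmul, aE_mul_ι, triU_ι, mul_assoc, aE_mul]

theorem N_ind_succ {n : ℕ} {P : Nc k H E (n + 1) → Prop} (h0 : P 0)
    (hadd : ∀ x y, P x → P y → P (x + y))
    (hι : ∀ e y, P (triU S n (e ⊗ₜ[k] y))) (y : Nc k H E (n + 1)) : P y := by
  induction y using TensorProduct.induction_on with
  | zero => exact h0
  | add x y hx hy => exact hadd _ _ hx hy
  | tmul x w =>
    obtain ⟨w, rfl⟩ := (tsucc k H n).surjective w
    induction w using TensorProduct.induction_on with
    | zero => rw [map_zero, TensorProduct.tmul_zero]; exact h0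
    | add y z hy hz => rw [map_add, TensorProduct.tmul_add]; exact hadd _ _ hy hz
    | tmul h w => rw [← triU_hE S]; exact hι _ _

/-- extend a (left `A`-linear) map `g` to `E ⊗_A g`. -/
def ext1 {n m : ℕ} (g : Nc k H E n →ₗ[k] Nc k H E m) : Nc k H E (n + 1) →ₗ[k] Nc k H E (m + 1) :=
  triU S m ∘ₗ TensorProduct.map LinearMap.id
    (g ∘ₗ TensorProduct.map S.hE LinearMap.id ∘ₗ (tsucc k H n).symm.toLinearMap)

theorem ext1_tmul {n m : ℕ} (g : Nc k H E n →ₗ[k] Nc k H E m) (e : E) (h : H) (w : Tpow k H n) :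
    ext1 S g (e ⊗ₜ[k] tsucc k H n (h ⊗ₜ[k] w)) = triU S m (e ⊗ₜ[k] g (S.hE h ⊗ₜ[k] w)) := by
  simp [ext1]

def LinN {n m : ℕ} (g : Nc k H E n →ₗ[k] Nc k H E m) : Prop :=
  ∀ (e : E) (y : Nc k H E n), g (lN e y) = lN e (g y)

theorem ext1_triU {n m : ℕ} {g : Nc k H E n →ₗ[k] Nc k H E m} (hg : LinN g) (e : E)
    (y : Nc k H E n) : ext1 S g (triU S n (e ⊗ₜ[k] y)) = triU S m (e ⊗ₜ[k] g y) := by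
  induction y using N_ind S with
  | h0 => simp
  | hadd x y hx hy => simp only [TensorProduct.tmul_add, map_add, hx, hy]
  | hι b h w => rw [triU_ι, ext1_tmul, triU_aE, ← hg, lN_tmul, ι_eq]

theorem ext1_lin {n m : ℕ} {g : Nc k H E n →ₗ[k] Nc k H E m} (hg : LinN g) : LinN (ext1 S g) := by
  intro e y
  induction y using N_ind_succ S with
  | h0 => simp
  | hadd x y hx hy => simp only [map_add, hx, hy]
  | hι e' y => rw [lN_triU, ext1_triU S hg, ext1_triU S hg, lN_triU]

def act1 (n : ℕ) : Nc k H E (n + 1) →ₗ[k] Nc k H E n :=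
  TensorProduct.map (LinearMap.mul' k E ∘ₗ TensorProduct.map LinearMap.id S.hE) LinearMap.id ∘ₗ
    (TensorProduct.assoc k E H (Tpow k H n)).symm.toLinearMap ∘ₗ
    TensorProduct.map LinearMap.id (tsucc k H n).symm.toLinearMap

theorem act1_tmul (n : ℕ) (e : E) (h : H) (w : Tpow k H n) :
    act1 S n (e ⊗ₜ[k] tsucc k H n (h ⊗ₜ[k] w)) = (e * S.hE h) ⊗ₜ[k] w := by
  simp [act1]

theorem act1_triU (n : ℕ) (e : E) (y : Nc k H E n) :
    act1 S n (triU S n (e ⊗ₜ[k] y)) = lN e y := by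
  induction y using N_ind S with
  | h0 => simp
  | hadd x y hx hy => simp only [TensorProduct.tmul_add, map_add, hx, hy]
  | hι b h w => rw [triU_ι, act1_tmul, lN_tmul, mul_assoc, ι_eq]

theorem act1_lin (n : ℕ) : LinN (act1 S n) := by
  intro e y
  induction y using N_ind_succ S with
  | h0 => simp
  | hadd x y hx hy => simp only [map_add, hx, hy]
  | hι e' y => rw [lN_triU, act1_triU, act1_triU, lN_lN]

/-- the faces -/
def tN : ∀ (_ n : ℕ), Nc k H E (n + 1) →ₗ[k] Nc k H E n
  | 0, n => act1 S n
  | _ + 1, 0 => 0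
  | i + 1, n + 1 => ext1 S (tN i n)

theorem tN_lin : ∀ i n : ℕ, LinN (tN S i n)
  | 0, n => act1_lin S n
  | _ + 1, 0 => fun e y => by simp [tN]
  | i + 1, n + 1 => ext1_lin S (tN_lin i n)

/-- (minus) the bar differential -/
def bN : ∀ (n : ℕ), Nc k H E (n + 1) →ₗ[k] Nc k H E n
  | 0 => - act1 S 0
  | n + 1 => - act1 S (n + 1) - ext1 S (bN n)

theorem bN_lin : ∀ n : ℕ, LinN (bN S n)
  | 0 => fun e y => by simp [bN, act1_lin S 0 e y]
  | n + 1 => fun e y => by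
      simp [bN, act1_lin S (n + 1) e y, ext1_lin S (bN_lin n) e y]

theorem bN_zero_triU (e : E) (y : Nc k H E 0) : bN S 0 (triU S 0 (e ⊗ₜ[k] y)) = - lN e y := by
  simp [bN, act1_triU]

theorem bN_succ_triU (n : ℕ) (e : E) (y : Nc k H E (n + 1)) :
    bN S (n + 1) (triU S (n + 1) (e ⊗ₜ[k] y)) = - lN e y - triU S n (e ⊗ₜ[k] bN S n y) := by
  simp [bN, act1_triU, ext1_triU S (bN_lin S n)]

theorem bN_bN (n : ℕ) (y : Nc k H E (n + 2)) : bN S n (bN S (n + 1) y) = 0 := by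
  induction n with
  | zero =>
    induction y using N_ind_succ S with
    | h0 => simp
    | hadd x y hx hy => simp only [map_add, hx, hy, add_zero]
    | hι e y => rw [bN_succ_triU, map_sub, bN_zero_triU, map_neg, bN_lin]; simp
  | succ n ih =>
    induction y using N_ind_succ S with
    | h0 => simp
    | hadd x y hx hy => simp only [map_add, hx, hy, add_zero]
    | hι e y => rw [bN_succ_triU, map_sub, bN_succ_triU, map_neg, bN_lin, ih]; simp

/-- expansion of `bN` into faces -/
theorem ext1_sum {n m : ℕ} {ι' : Type} (s : Finset ι') (c : ι' → ℤ)
    (g : ι' → (Nc k H E n →ₗ[k] Nc k H E m)) :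
    ext1 S (∑ i ∈ s, c i • g i) = ∑ i ∈ s, c i • ext1 S (g i) := by
  apply TensorProduct.ext'
  intro e w
  obtain ⟨w, rfl⟩ := (tsucc k H n).surjective w
  induction w using TensorProduct.induction_on with
  | zero => simp
  | add x y hx hy => simp only [map_add, TensorProduct.tmul_add, hx, hy]
  | tmul h w =>
    simp only [ext1_tmul, LinearMap.sum_apply, LinearMap.smul_apply, TensorProduct.tmul_sum, map_sum]
    refine Finset.sum_congr rfl fun i _ => ?_
    rw [← map_zsmul (triU S m), TensorProduct.tmul_smul]

theorem bN_eq (n : ℕ) : bN S n = ∑ i : Fin (n + 1), ((-1 : ℤ) ^ ((i : ℕ) + 1)) • tN S (i : ℕ) n := by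
  induction n with
  | zero => simp [bN, tN]
  | succ n ih =>
    rw [Fin.sum_univ_succ, bN, ih, ext1_sum, sub_eq_add_neg]
    congr 1
    · simp [tN]
    · rw [← Finset.sum_neg_distrib]
      refine Finset.sum_congr rfl fun i _ => ?_
      rw [Fin.val_succ, tN, pow_succ _ ((i : ℕ) + 1)]
      simp

/-- right action of `E` -/
def rN (x : E) : ∀ n : ℕ, Nc k H E n →ₗ[k] Nc k H E n
  | 0 => TensorProduct.map (LinearMap.mulRight k x) LinearMap.id
  | n + 1 => ext1 S (rN x n)

theorem rN_zero (x e : E) (w : Tpow k H 0) : rN S x 0 (e ⊗ₜ[k] w) = (e * x) ⊗ₜ[k] w := rfl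

theorem rN_lin (x : E) : ∀ n, LinN (rN S x n)
  | 0 => fun e y => by
      induction y using TensorProduct.induction_on with
      | zero => simp
      | add x y hx hy => simp only [map_add, hx, hy]
      | tmul e' w => rw [rN_zero, lN_tmul, lN_tmul, rN_zero, mul_assoc]
  | n + 1 => ext1_lin S (rN_lin x n)

theorem rN_triU (x : E) (n : ℕ) (e : E) (y : Nc k H E n) :
    rN S x (n + 1) (triU S n (e ⊗ₜ[k] y)) = triU S n (e ⊗ₜ[k] rN S x n y) :=
  ext1_triU S (rN_lin S x n) e y

theorem rN_rN (x x' : E) (n : ℕ) (y : Nc k H E n) :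
    rN S x' n (rN S x n y) = rN S (x * x') n y := by
  induction n with
  | zero =>
    induction y using TensorProduct.induction_on with
    | zero => simp
    | add x y hx hy => simp only [map_add, hx, hy]
    | tmul e' w => simp only [rN_zero, mul_assoc]
  | succ n ih =>
    induction y using N_ind_succ S with
    | h0 => simp
    | hadd x y hx hy => simp only [map_add, hx, hy]
    | hι e y => simp only [rN_triU, ih]

theorem rN_one (n : ℕ) (y : Nc k H E n) : rN S 1 n y = y := by
  induction n with
  | zero =>
    induction y using TensorProduct.induction_on with
    | zero => simp
    | add x y hx hy => simp only [map_add, hx, hy]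
    | tmul e' w => simp only [rN_zero, mul_one]
  | succ n ih =>
    induction y using N_ind_succ S with
    | h0 => simp
    | hadd x y hx hy => simp only [map_add, hx, hy]
    | hι e y => simp only [rN_triU, ih]

theorem bN_rN (x : E) (n : ℕ) (y : Nc k H E (n + 1)) :
    bN S n (rN S x (n + 1) y) = rN S x n (bN S n y) := by
  induction n with
  | zero =>
    induction y using N_ind_succ S with
    | h0 => simp
    | hadd x y hx hy => simp only [map_add, hx, hy]
    | hι e y => rw [rN_triU, bN_zero_triU, bN_zero_triU, map_neg, rN_lin]
  | succ n ih =>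
    induction y using N_ind_succ S with
    | h0 => simp
    | hadd x y hx hy => simp only [map_add, hx, hy]
    | hι e y => rw [rN_triU, bN_succ_triU, bN_succ_triU, map_sub, map_neg, rN_lin, rN_triU, ih]

/-- append `1` -/
def pN : ∀ n : ℕ, Nc k H E n →ₗ[k] Nc k H E (n + 1)
  | 0 => TensorProduct.map LinearMap.id ((tsucc k H 0).toLinearMap ∘ₗ TensorProduct.mk k H _ 1)
  | n + 1 => ext1 S (pN n)

theorem pN_zero (e : E) (w : Tpow k H 0) :
    pN S 0 (e ⊗ₜ[k] w) = triU S 0 (e ⊗ₜ[k] (1 ⊗ₜ[k] w)) := by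
  rw [← hE_one S, triU_hE]; rfl

theorem pN_lin : ∀ n, LinN (pN S n)
  | 0 => fun e y => by
      induction y using TensorProduct.induction_on with
      | zero => simp
      | add x y hx hy => simp only [map_add, hx, hy]
      | tmul e' w => rw [pN_zero, lN_tmul, pN_zero, lN_triU]
  | n + 1 => ext1_lin S (pN_lin n)

theorem pN_triU (n : ℕ) (e : E) (y : Nc k H E n) :
    pN S (n + 1) (triU S n (e ⊗ₜ[k] y)) = triU S (n + 1) (e ⊗ₜ[k] pN S n y) :=
  ext1_triU S (pN_lin S n) e y

theorem bN_pN_zero (y : Nc k H E 0) : bN S 0 (pN S 0 y) = - y := by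
  induction y using TensorProduct.induction_on with
  | zero => simp
  | add x y hx hy => simp only [map_add, hx, hy, neg_add]
  | tmul e w => rw [pN_zero, bN_zero_triU, lN_tmul, mul_one]

theorem bN_pN (n : ℕ) (y : Nc k H E (n + 1)) :
    bN S (n + 1) (pN S (n + 1) y) = pN S n (bN S n y) + ((-1 : ℤ) ^ n) • y := by
  induction n with
  | zero =>
    induction y using N_ind_succ S with
    | h0 => simp
    | hadd x y hx hy => simp only [map_add, hx, hy, smul_add]; abel
    | hι e y =>
      rw [pN_triU, bN_succ_triU, bN_pN_zero, bN_zero_triU, map_neg, pN_lin, TensorProduct.tmul_neg, map_neg]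
      simp
  | succ n ih =>
    induction y using N_ind_succ S with
    | h0 => simp
    | hadd x y hx hy => simp only [map_add, hx, hy, smul_add]; abel
    | hι e y =>
      rw [pN_triU, bN_succ_triU, ih, bN_succ_triU, map_sub, map_neg, pN_lin, pN_triU,
        TensorProduct.tmul_add, map_add, TensorProduct.tmul_smul, map_zsmul, pow_succ]
      simp
      abel

theorem pN_rN_aE (n : ℕ) (a : A) (y : Nc k H E n) :
    rN S (S.aE a) (n + 1) (pN S n y) = pN S n (rN S (S.aE a) n y) := by
  induction n with
  | zero =>
    induction y using TensorProduct.induction_on with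
    | zero => simp
    | add x y hx hy => simp only [map_add, hx, hy]
    | tmul e w =>
      rw [pN_zero, rN_triU, rN_zero, rN_zero, pN_zero, triU_aE, lN_tmul, one_mul, mul_one]
  | succ n ih =>
    induction y using N_ind_succ S with
    | h0 => simp
    | hadd x y hx hy => simp only [map_add, hx, hy]
    | hι e y => rw [pN_triU, rN_triU, rN_triU, ih, pN_triU]

/-- `(e ⊗ hs ⊗ 1)·(1#h) = e ⊗ hs ⊗ h`. -/
theorem rN_hE_pN (n : ℕ) (e : E) (hs : Fin n → H) (h : H) :
    rN S (S.hE h) (n + 1) (pN S n (e ⊗ₜ[k] tp k hs)) =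
      e ⊗ₜ[k] tp k (Fin.snoc hs h : Fin (n + 1) → H) := by
  induction n generalizing e with
  | zero =>
    rw [pN_zero, rN_triU, rN_zero, one_mul, triU_hE, tp_succ]
    congr 1
  | succ n ih =>
    rw [tp_succ, ← triU_hE S, pN_triU, rN_triU, ih, triU_hE, tp_succ (Fin.snoc hs h)]
    congr 4
    · funext i
      refine Fin.lastCases ?_ (fun j => ?_) i
      · rw [Fin.snoc_last, Fin.succ_last, Fin.snoc_last]
      · rw [Fin.snoc_castSucc, Fin.succ_castSucc, Fin.snoc_castSucc]

theorem pN_tp (n : ℕ) (e : E) (hs : Fin n → H) :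
    pN S n (e ⊗ₜ[k] tp k hs) = e ⊗ₜ[k] tp k (Fin.snoc hs 1 : Fin (n + 1) → H) := by
  rw [← rN_hE_pN S, hE_one, rN_one]

end AuxN

section AuxP
variable {k A H E : Type} [CommRing k] [Ring A] [Algebra k A] [Ring H] [HopfAlgebra k H]
  [Ring E] [Algebra k E]

variable (k H) in
def tq : ∀ n : ℕ, Tpow k H n →ₗ[k] Tpow k (Qbar k H) n
  | 0 => (tzero k (Qbar k H)).toLinearMap ∘ₗ (tzero k H).symm.toLinearMap
  | n + 1 => (tsucc k (Qbar k H) n).toLinearMap ∘ₗ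
      TensorProduct.map (qbar k H) (tq n) ∘ₗ (tsucc k H n).symm.toLinearMap

theorem tq_tp : ∀ (n : ℕ) (h : Fin n → H), tq k H n (tp k h) = tp k (fun i => qbar k H (h i))
  | 0, h => by simp [tq, tp_zero]
  | n + 1, h => by
      rw [tp_succ, tp_succ, ← tq_tp n]
      simp [tq]

variable (k H) in
def spl : ∀ n : ℕ, Tpow k H (n + 1) →ₗ[k] Tpow k (Qbar k H) n ⊗[k] H
  | 0 => (TensorProduct.comm k _ _).toLinearMap ∘ₗ
      TensorProduct.map LinearMap.id (tq k H 0) ∘ₗ (tsucc k H 0).symm.toLinearMap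
  | n + 1 => TensorProduct.map (tsucc k (Qbar k H) n).toLinearMap LinearMap.id ∘ₗ
      (TensorProduct.assoc k _ _ _).symm.toLinearMap ∘ₗ
      TensorProduct.map (qbar k H) (spl n) ∘ₗ (tsucc k H (n + 1)).symm.toLinearMap

theorem spl_tp : ∀ (n : ℕ) (h : Fin (n + 1) → H),
    spl k H n (tp k h) = tp k (fun i : Fin n => qbar k H (h i.castSucc)) ⊗ₜ[k] h (Fin.last n)
  | 0, h => by
      rw [tp_succ]
      simp only [spl, LinearMap.comp_apply, LinearEquiv.coe_coe, LinearEquiv.symm_apply_apply,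
        TensorProduct.map_tmul, LinearMap.id_apply, TensorProduct.comm_tmul, tq_tp]
      rfl
  | n + 1, h => by
      rw [tp_succ]
      simp only [spl, LinearMap.comp_apply, LinearEquiv.coe_coe, LinearEquiv.symm_apply_apply,
        TensorProduct.map_tmul, LinearMap.id_apply, spl_tp n, TensorProduct.assoc_symm_tmul]
      rfl

variable (k H E) in
def projY (s : ℕ) : Nc k H E (s + 1) →ₗ[k] Yc k H E s :=
  TensorProduct.map LinearMap.id (spl k H s)

theorem projY_tp (s : ℕ) (e : E) (h : Fin (s + 1) → H) :
    projY k H E s (e ⊗ₜ[k] tp k h) = ygen e (fun i : Fin s => h i.castSucc) (h (Fin.last s)) := by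
  rw [projY, TensorProduct.map_tmul, spl_tp]; rfl

theorem projY_snoc (s : ℕ) (e : E) (hs : Fin s → H) (h : H) :
    projY k H E s (e ⊗ₜ[k] tp k (Fin.snoc hs h : Fin (s + 1) → H)) = ygen e hs h := by
  rw [projY_tp]; simp

theorem lift_q {B : Type} [Ring B] [Algebra k B] {n : ℕ} (v : Fin n → Qbar k B) :
    ∃ w : Fin n → B, v = fun i => qbar k B (w i) := by
  choose w hw using fun i => (Submodule.mkQ_surjective (unitSub k B)) (v i)
  exact ⟨w, funext fun i => (hw i).symm⟩

variable {M : Type} [AddCommGroup M] [Module k M]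

theorem Y_ext {s : ℕ} {f g : Yc k H E s →ₗ[k] M}
    (h : ∀ e (hs : Fin s → H) h', f (ygen e hs h') = g (ygen e hs h')) : f = g := by
  apply TensorProduct.ext
  apply LinearMap.ext; intro e
  apply TensorProduct.ext
  apply tpow_ext
  intro v
  obtain ⟨w, rfl⟩ := lift_q v
  apply LinearMap.ext; intro h'
  exact h e w h'

theorem X_ext {r s : ℕ} {f g : Xc k A H E r s →ₗ[k] M}
    (h : ∀ e (hs : Fin s → H) (as : Fin r → A) e', f (xgen e hs as e') = g (xgen e hs as e')) :
    f = g := by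
  apply TensorProduct.ext
  apply LinearMap.ext; intro e
  apply TensorProduct.ext
  apply tpow_ext
  intro v
  obtain ⟨w, rfl⟩ := lift_q v
  apply TensorProduct.ext
  apply tpow_ext
  intro v'
  obtain ⟨w', rfl⟩ := lift_q v'
  apply LinearMap.ext; intro h'
  exact h e w w' h'

theorem N_ext {n : ℕ} {f g : Nc k H E n →ₗ[k] M}
    (h : ∀ e (hs : Fin n → H), f (e ⊗ₜ[k] tp k hs) = g (e ⊗ₜ[k] tp k hs)) : f = g := by
  apply TensorProduct.ext
  apply LinearMap.ext; intro e
  apply tpow_ext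
  intro v
  exact h e v

theorem Y_ext' {s : ℕ} {f g : Yc k H E s →ₗ[k] M}
    (h : ∀ y, f (projY k H E s y) = g (projY k H E s y)) : f = g := by
  apply Y_ext
  intro e hs h'
  rw [← projY_snoc]
  exact h _

theorem xgen_add_left (e₁ e₂ : E) {r s : ℕ} (hs : Fin s → H) (as : Fin r → A) (x : E) :
    (xgen (e₁ + e₂) hs as x : Xc k A H E r s) = xgen e₁ hs as x + xgen e₂ hs as x :=
  TensorProduct.add_tmul _ _ _
theorem xgen_zero_left {r s : ℕ} (hs : Fin s → H) (as : Fin r → A) (x : E) :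
    (xgen 0 hs as x : Xc k A H E r s) = 0 :=
  TensorProduct.zero_tmul _ _
theorem xgen_add_right (e x₁ x₂ : E) {r s : ℕ} (hs : Fin s → H) (as : Fin r → A) :
    (xgen e hs as (x₁ + x₂) : Xc k A H E r s) = xgen e hs as x₁ + xgen e hs as x₂ := by
  simp only [xgen, TensorProduct.tmul_add]
theorem xgen_zero_right (e : E) {r s : ℕ} (hs : Fin s → H) (as : Fin r → A) :
    (xgen e hs as 0 : Xc k A H E r s) = 0 := by
  simp only [xgen, TensorProduct.tmul_zero]

theorem X_ext_ι (S : CrossedProduct k A H E) {r s : ℕ} {f g : Xc k A H E r s →ₗ[k] M}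
    (h : ∀ a₀ h₀ (hs : Fin s → H) (as : Fin r → A) b h',
      f (xgen (S.ι (a₀ ⊗ₜ[k] h₀)) hs as (S.ι (b ⊗ₜ[k] h'))) =
      g (xgen (S.ι (a₀ ⊗ₜ[k] h₀)) hs as (S.ι (b ⊗ₜ[k] h')))) :
    f = g := by
  apply X_ext
  intro e hs as x
  induction e using E_ind S with
  | h0 => simp only [xgen_zero_left, map_zero]
  | hadd y z hy hz => simp only [xgen_add_left, map_add, hy, hz]
  | hι a₀ h₀ =>
    induction x using E_ind S with
    | h0 => simp only [xgen_zero_right, map_zero]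
    | hadd y z hy hz => simp only [xgen_add_right, map_add, hy, hz]
    | hι b h' => exact h _ _ _ _ _ _

theorem sum_pi_succ {P : Type} [AddCommMonoid P] {n : ℕ} {N : Fin (n + 1) → ℕ}
    (F : (∀ i, Fin (N i)) → P) :
    ∑ c, F c = ∑ x : Fin (N 0), ∑ c' : (∀ i : Fin n, Fin (N i.succ)), F (Fin.cons x c') := by
  rw [← (Fin.consEquiv (fun i => Fin (N i))).sum_comp, Fintype.sum_prod_type]
  rfl

variable (S : CrossedProduct k A H E)

theorem rN_add_x (x x' : E) (n : ℕ) (y : Nc k H E n) :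
    rN S (x + x') n y = rN S x n y + rN S x' n y := by
  induction n with
  | zero =>
    induction y using TensorProduct.induction_on with
    | zero => simp
    | add x y hx hy => simp only [map_add, hx, hy]; abel
    | tmul e' w => simp only [rN_zero, mul_add, TensorProduct.add_tmul]
  | succ n ih =>
    induction y using N_ind_succ S with
    | h0 => simp
    | hadd x y hx hy => simp only [map_add, hx, hy]; abel
    | hι e y => simp only [rN_triU, ih, TensorProduct.tmul_add, map_add]

theorem rN_zero_x (n : ℕ) (y : Nc k H E n) : rN S (0 : E) n y = 0 := by
  have := rN_add_x S 0 0 n y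
  rw [add_zero] at this
  exact left_eq_add.mp this

theorem rN_aE_sum (s : ℕ) (a₀ : A) (h : Fin (s + 1) → H) (b : A)
    (Nv : Fin (s + 1) → ℕ) (v : ∀ i, Fin (Nv i) → Fin 2 → H)
    (hv : ∀ i, SRep k 1 (h i) (Nv i) (v i)) :
    rN S (S.aE b) s (S.ι (a₀ ⊗ₜ[k] h 0) ⊗ₜ[k] tp k (fun i => h i.succ)) =
      ∑ c : (∀ i, Fin (Nv i)),
        S.ι ((a₀ * iterAct k S.act (fun i => v i (c i) 0) b) ⊗ₜ[k] (v 0 (c 0) 1)) ⊗ₜ[k]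
          tp k (fun i : Fin s => v i.succ (c i.succ) 1) := by
  induction s generalizing a₀ with
  | zero =>
    rw [rN_zero, ι_mul_aE S a₀ b (h 0) (Nv 0) (v 0) (hv 0), TensorProduct.sum_tmul, sum_pi_succ]
    refine Finset.sum_congr rfl fun x _ => ?_
    rw [Fintype.sum_unique]
    rfl
  | succ s ih =>
    rw [tp_succ, rN, ext1_tmul, hE_apply, ih 1 (fun i => h i.succ) (fun i => Nv i.succ)
      (fun i => v i.succ) (fun i => hv i.succ), TensorProduct.tmul_sum, map_sum]
    conv_rhs => rw [sum_pi_succ, Finset.sum_comm]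
    refine Finset.sum_congr rfl fun c _ => ?_
    rw [triU_ι, one_mul, ι_mul_aE S a₀ _ (h 0) (Nv 0) (v 0) (hv 0), TensorProduct.sum_tmul]
    rfl

theorem tN_sum (i n : ℕ) (hin : i ≤ n) (a : A) (h : Fin (n + 2) → H)
    (Nv : Fin (n + 2) → ℕ) (v : ∀ i, Fin (Nv i) → Fin 2 → H)
    (hv : ∀ i, SRep k 1 (h i) (Nv i) (v i)) :
    tN S i n (S.ι (a ⊗ₜ[k] h 0) ⊗ₜ[k] tp k (fun i => h i.succ)) =
      ∑ c : (∀ j : Fin (i + 2), Fin (Nv ⟨(j : ℕ), by have := j.isLt; omega⟩)),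
        S.ι ((a * iterAct k S.act
                (fun j : Fin i =>
                  v ⟨(j : ℕ), by have := j.isLt; omega⟩
                    (c ⟨(j : ℕ), by have := j.isLt; omega⟩) 0)
                (S.f (v ⟨i, by omega⟩ (c ⟨i, by omega⟩) 0)
                     (v ⟨i + 1, by omega⟩ (c ⟨i + 1, by omega⟩) 0))) ⊗ₜ[k]
              (if i = 0 then
                  (v ⟨0, by omega⟩ (c ⟨0, by omega⟩) 1) * (v ⟨1, by omega⟩ (c ⟨1, by omega⟩) 1)
                else v ⟨0, by omega⟩ (c ⟨0, by omega⟩) 1)) ⊗ₜ[k]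
          tp k (fun p : Fin n =>
              if hp : (p : ℕ) + 1 < i then
                v ⟨(p : ℕ) + 1, by have := p.isLt; omega⟩
                  (c ⟨(p : ℕ) + 1, by omega⟩) 1
              else if hp' : (p : ℕ) + 1 = i then
                (v ⟨(p : ℕ) + 1, by have := p.isLt; omega⟩ (c ⟨(p : ℕ) + 1, by omega⟩) 1) *
                  (v ⟨(p : ℕ) + 2, by have := p.isLt; omega⟩
                    (c ⟨(p : ℕ) + 2, by omega⟩) 1)
              else h ⟨(p : ℕ) + 2, by have := p.isLt; omega⟩) := by
  induction i generalizing n a with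
  | zero =>
    rw [tN, tp_succ, act1_tmul]
    rw [ι_mul_hE S a (h 0) (h (Fin.succ 0)) (Nv 0) (Nv 1) (v 0) (v 1) (hv 0) (hv 1)]
    rw [TensorProduct.sum_tmul, sum_pi_succ]
    refine Finset.sum_congr rfl fun x _ => ?_
    rw [TensorProduct.sum_tmul, sum_pi_succ]
    refine Finset.sum_congr rfl fun y _ => ?_
    rw [Fintype.sum_unique]
    simp only [if_true, not_lt_zero, dite_false, Nat.add_eq_zero_iff, one_ne_zero, and_false]
    rfl
  | succ i ih =>
    obtain ⟨m, rfl⟩ : ∃ m, n = m + 1 := ⟨n - 1, by omega⟩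
    rw [tN, tp_succ, ext1_tmul, hE_apply, ih m (by omega) 1 (fun i => h i.succ)
      (fun i => Nv i.succ) (fun i => v i.succ) (fun i => hv i.succ), TensorProduct.tmul_sum,
      map_sum]
    conv_rhs => rw [sum_pi_succ, Finset.sum_comm]
    refine Finset.sum_congr rfl fun c _ => ?_
    rw [triU_ι, one_mul, ι_mul_aE S a _ (h 0) (Nv 0) (v 0) (hv 0), TensorProduct.sum_tmul]
    refine Finset.sum_congr rfl fun x _ => ?_
    rw [if_neg (Nat.succ_ne_zero i), ← tp_cons]
    congr 2
    funext p
    refine Fin.cases ?_ (fun q => ?_) p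
    · rw [Fin.cons_zero]
      by_cases hi : i = 0
      · subst hi
        rfl
      · rw [if_neg hi, dif_pos (show ((0 : Fin (m + 1)) : ℕ) + 1 < i + 1 by simp; omega)]
        rfl
    · rw [Fin.cons_succ]
      by_cases h1 : (q : ℕ) + 1 < i
      · rw [dif_pos h1, dif_pos (show ((q.succ : Fin (m + 1)) : ℕ) + 1 < i + 1 by simp; omega)]
        rfl
      · rw [dif_neg h1, dif_neg (show ¬ ((q.succ : Fin (m + 1)) : ℕ) + 1 < i + 1 by simp; omega)]
        by_cases h2 : (q : ℕ) + 1 = i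
        · rw [dif_pos h2, dif_pos (show ((q.succ : Fin (m + 1)) : ℕ) + 1 = i + 1 by simp; omega)]
          rfl
        · rw [dif_neg h2, dif_neg (show ¬ ((q.succ : Fin (m + 1)) : ℕ) + 1 = i + 1 by simp; omega)]
          rfl

end AuxP

section AuxR
variable {k A H E : Type} [CommRing k] [Ring A] [Algebra k A] [Ring H] [HopfAlgebra k H]
  [Ring E] [Algebra k E] {S : CrossedProduct k A H E} (R : ResData k A H E S)

theorem N_ext_ι (S : CrossedProduct k A H E) {M : Type} [AddCommGroup M] [Module k M]
    {n : ℕ} {f g : Nc k H E n →ₗ[k] M}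
    (h : ∀ a h₀ (hs : Fin n → H), f (S.ι (a ⊗ₜ[k] h₀) ⊗ₜ[k] tp k hs) =
      g (S.ι (a ⊗ₜ[k] h₀) ⊗ₜ[k] tp k hs)) : f = g := by
  apply N_ext
  intro e hs
  induction e using E_ind S with
  | h0 => simp only [TensorProduct.zero_tmul, map_zero]
  | hadd y z hy hz => simp only [TensorProduct.add_tmul, map_add, hy, hz]
  | hι a₀ h₀ => exact h _ _ _

theorem del_projY (s : ℕ) (y : Nc k H E (s + 2)) :
    R.del s (projY k H E (s + 1) y) = projY k H E s (bN S (s + 1) y) := by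
  suffices R.del s ∘ₗ projY k H E (s + 1) = projY k H E s ∘ₗ bN S (s + 1) from
    LinearMap.congr_fun this y
  apply N_ext_ι S
  intro a h₀ hs'
  obtain ⟨hs, h', rfl⟩ : ∃ (hs : Fin (s + 1) → H) (h' : H), hs' = Fin.snoc hs h' :=
    ⟨Fin.init hs', hs' (Fin.last _), (Fin.snoc_init_self hs').symm⟩
  simp only [LinearMap.comp_apply]
  rw [projY_snoc]
  choose Nv v hv using fun i => srep_exists (k := k) 1
    ((Fin.cons h₀ (Fin.snoc hs h') : Fin (s + 3) → H) i)
  rw [R.del_eq s a h₀ hs h' Nv v hv, bN_eq, LinearMap.sum_apply, map_sum]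
  refine Finset.sum_congr rfl fun i _ => ?_
  rw [LinearMap.smul_apply, map_zsmul]
  congr 1
  have := tN_sum S (i : ℕ) (s + 1) (by omega) a (Fin.cons h₀ (Fin.snoc hs h')) Nv v hv
  simp only [Fin.cons_zero, Fin.cons_succ] at this
  rw [this, map_sum]
  refine Finset.sum_congr rfl fun c _ => ?_
  rw [projY_tp]
  congr 1
  have hi := i.isLt
  by_cases h1 : (i : ℕ) = s + 1
  · rw [dif_pos h1, dif_neg (by simp [h1]), dif_pos (by simp [h1])]
    rfl
  · rw [dif_neg h1, dif_neg (by simp; omega), dif_neg (by simp; omega)]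
    rfl

theorem mu_gen (s : ℕ) (e : E) (hs : Fin s → H) (as : Fin 0 → A) (x : E) :
    R.mu s (xgen e hs as x) =
      projY k H E s (rN S x (s + 1) (pN S s (e ⊗ₜ[k] tp k hs))) := by
  have has : as = fun i => i.elim0 := funext fun i => i.elim0
  subst has
  induction e using E_ind S with
  | h0 => simp only [xgen_zero_left, map_zero, TensorProduct.zero_tmul]
  | hadd y z hy hz => simp only [xgen_add_left, map_add, hy, hz, TensorProduct.add_tmul]
  | hι a₀ h₀ =>
    induction x using E_ind S with
    | h0 =>
      rw [xgen_zero_right, map_zero]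
      rw [rN_zero_x, map_zero]
    | hadd y z hy hz => rw [xgen_add_right, map_add, hy, hz, rN_add_x, map_add]
    | hι b h' =>
      choose Nv v hv using fun i => srep_exists (k := k) 1
        ((Fin.cons h₀ hs : Fin (s + 1) → H) i)
      rw [R.mu_eq s a₀ h₀ hs b h' Nv v hv, ι_eq, ← rN_rN, pN_rN_aE]
      have := rN_aE_sum S s a₀ (Fin.cons h₀ hs) b Nv v hv
      simp only [Fin.cons_zero, Fin.cons_succ] at this
      rw [this]
      simp only [map_sum, rN_hE_pN, projY_snoc]

end AuxR

section AuxD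
variable {k A H E : Type} [CommRing k] [Ring A] [Algebra k A] [Ring H] [HopfAlgebra k H]
  [Ring E] [Algebra k E] {S : CrossedProduct k A H E} (R : ResData k A H E S)

variable (k A H E) in
def xg {r s : ℕ} (as : Fin r → A) (x : E) : Nc k H E s →ₗ[k] Xc k A H E r s :=
  TensorProduct.map LinearMap.id
    ((TensorProduct.mk k _ _).flip (tp k (fun i => qbar k A (as i)) ⊗ₜ[k] x) ∘ₗ tq k H s)

theorem xg_tp {r s : ℕ} (as : Fin r → A) (x e : E) (hs : Fin s → H) :
    xg k A H E as x (e ⊗ₜ[k] tp k hs) = xgen e hs as x := by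
  simp only [xg, TensorProduct.map_tmul, LinearMap.comp_apply, tq_tp]; rfl

theorem X_ext_g (S : CrossedProduct k A H E) {M : Type} [AddCommGroup M] [Module k M] {r s : ℕ}
    {f g : Xc k A H E r s →ₗ[k] M}
    (h : ∀ y (as : Fin r → A) b h', f (xg k A H E as (S.ι (b ⊗ₜ[k] h')) y) =
      g (xg k A H E as (S.ι (b ⊗ₜ[k] h')) y)) : f = g := by
  apply X_ext_ι S
  intro a₀ h₀ hs as b h'
  rw [← xg_tp]
  exact h _ _ _ _

theorem X_ext_x {M : Type} [AddCommGroup M] [Module k M] {r s : ℕ}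
    {f g : Xc k A H E r s →ₗ[k] M}
    (h : ∀ y (as : Fin r → A) x, f (xg k A H E as x y) = g (xg k A H E as x y)) : f = g := by
  apply X_ext
  intro e hs as x
  rw [← xg_tp]
  exact h _ _ _

def d0 (r s : ℕ) : Xc k A H E (r + 1) s →ₗ[k] Xc k A H E r s := R.dl 0 (r + 1) s

theorem d0_g (r s : ℕ) (as : Fin (r + 1) → A) (b : A) (h' : H) (y : Nc k H E s) :
    d0 R r s (xg k A H E as (S.ι (b ⊗ₜ[k] h')) y) =
      xg k A H E (fun i : Fin r => as i.succ) (S.ι (b ⊗ₜ[k] h')) (rN S (S.aE (as 0)) s y)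
      + (∑ i : Fin r, ((-1 : ℤ) ^ ((i : ℕ) + 1)) •
          xg k A H E (mulAt as i) (S.ι (b ⊗ₜ[k] h')) y)
      + ((-1 : ℤ) ^ (r + 1)) •
          xg k A H E (fun i : Fin r => as i.castSucc)
            (S.ι ((as (Fin.last r) * b) ⊗ₜ[k] h')) y := by
  suffices d0 R r s ∘ₗ xg k A H E as (S.ι (b ⊗ₜ[k] h')) =
      xg k A H E (fun i : Fin r => as i.succ) (S.ι (b ⊗ₜ[k] h')) ∘ₗ (rN S (S.aE (as 0)) s)
      + (∑ i : Fin r, ((-1 : ℤ) ^ ((i : ℕ) + 1)) •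
          xg k A H E (mulAt as i) (S.ι (b ⊗ₜ[k] h')))
      + ((-1 : ℤ) ^ (r + 1)) •
          xg k A H E (fun i : Fin r => as i.castSucc)
            (S.ι ((as (Fin.last r) * b) ⊗ₜ[k] h')) by
    have := LinearMap.congr_fun this y
    simpa only [LinearMap.comp_apply, LinearMap.add_apply, LinearMap.sum_apply,
      LinearMap.smul_apply] using this
  apply N_ext_ι S
  intro a₀ h₀ hs
  simp only [LinearMap.comp_apply, LinearMap.add_apply, LinearMap.sum_apply,
      LinearMap.smul_apply, xg_tp]
  choose Nv v hv using fun i => srep_exists (k := k) 1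
        ((Fin.cons h₀ hs : Fin (s + 1) → H) i)
  refine (R.d0_eq r s a₀ h₀ hs as b h' Nv v hv).trans ?_
  have := rN_aE_sum S s a₀ (Fin.cons h₀ hs) (as 0) Nv v hv
  simp only [Fin.cons_zero, Fin.cons_succ] at this
  rw [this, map_sum]
  simp only [xg_tp]

theorem mu_g (s : ℕ) (as : Fin 0 → A) (x : E) (y : Nc k H E s) :
    R.mu s (xg k A H E as x y) = projY k H E s (rN S x (s + 1) (pN S s y)) := by
  suffices R.mu s ∘ₗ xg k A H E as x = projY k H E s ∘ₗ rN S x (s + 1) ∘ₗ pN S s from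
    LinearMap.congr_fun this y
  apply N_ext
  intro e hs
  simp only [LinearMap.comp_apply, xg_tp, mu_gen]

theorem sig_g (r s : ℕ) (as : Fin r → A) (b : A) (h' : H) (y : Nc k H E s) :
    R.sig r s (xg k A H E as (S.ι (b ⊗ₜ[k] h')) y) =
      ((-1 : ℤ) ^ (r + 1)) • xg k A H E (Fin.snoc as b : Fin (r + 1) → A) (S.hE h') y := by
  suffices R.sig r s ∘ₗ xg k A H E as (S.ι (b ⊗ₜ[k] h')) =
      ((-1 : ℤ) ^ (r + 1)) • xg k A H E (Fin.snoc as b : Fin (r + 1) → A) (S.hE h') from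
    LinearMap.congr_fun this y
  apply N_ext
  intro e hs
  simp only [LinearMap.comp_apply, LinearMap.smul_apply, xg_tp, R.sig_eq]

theorem sig0_g (s : ℕ) (as : Fin 0 → A) (h : H) (y : Nc k H E s) :
    R.sig0 s (projY k H E s (rN S (S.hE h) (s + 1) (pN S s y))) = xg k A H E as (S.hE h) y := by
  suffices R.sig0 s ∘ₗ projY k H E s ∘ₗ rN S (S.hE h) (s + 1) ∘ₗ pN S s =
    xg k A H E as (S.hE h) from LinearMap.congr_fun this y
  apply N_ext
  intro e hs
  have has : as = fun i => i.elim0 := funext fun i => i.elim0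
  subst has
  simp only [LinearMap.comp_apply, xg_tp, rN_hE_pN, projY_snoc, R.sig0_eq]

theorem Y_ext_p (S : CrossedProduct k A H E) {M : Type} [AddCommGroup M] [Module k M] {s : ℕ}
    {f g : Yc k H E s →ₗ[k] M}
    (h : ∀ y h', f (projY k H E s (rN S (S.hE h') (s + 1) (pN S s y))) =
      g (projY k H E s (rN S (S.hE h') (s + 1) (pN S s y)))) : f = g := by
  apply Y_ext
  intro e hs h'
  rw [← projY_snoc, ← rN_hE_pN S]
  exact h _ _

theorem mu_sig0 (s : ℕ) : R.mu s ∘ₗ R.sig0 s = LinearMap.id := by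
  apply Y_ext_p S
  intro y h'
  simp only [LinearMap.comp_apply, LinearMap.id_apply]
  rw [sig0_g R s (fun i => i.elim0), mu_g]

theorem row0 (s : ℕ) : R.sig0 s ∘ₗ R.mu s + d0 R 0 s ∘ₗ R.sig 0 s = LinearMap.id := by
  apply X_ext_g S
  intro y as b h'
  simp only [LinearMap.comp_apply, LinearMap.id_apply, LinearMap.add_apply]
  have e2 : S.hE h' = S.ι ((1 : A) ⊗ₜ[k] h') := hE_apply S h'
  rw [mu_g, ι_eq, ← rN_rN, pN_rN_aE, sig0_g R s as, ← ι_eq, sig_g, map_zsmul, e2, d0_g]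
  simp only [Finset.univ_eq_empty, Finset.sum_empty, mul_one]
  have h1 : (fun i : Fin 0 => (Fin.snoc as b : Fin 1 → A) i.succ) = as := funext fun i => i.elim0
  have h2 : (fun i : Fin 0 => (Fin.snoc as b : Fin 1 → A) i.castSucc) = as :=
    funext fun i => i.elim0
  have h3 : (Fin.snoc as b : Fin 1 → A) 0 = b := rfl
  have h4 : (Fin.snoc as b : Fin 1 → A) (Fin.last 0) = b := rfl
  rw [h1, h2, h3, h4]
  simp

theorem mulAt_snoc_castSucc {r : ℕ} (as : Fin (r + 1) → A) (b : A) (i : Fin r) :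
    mulAt (Fin.snoc as b : Fin (r + 2) → A) i.castSucc = Fin.snoc (mulAt as i) b := by
  funext j
  refine Fin.lastCases ?_ (fun j => ?_) j
  · rw [Fin.snoc_last, mulAt, if_neg (by simp), if_neg (by simp; omega), Fin.succ_last,
      Fin.snoc_last]
  · rw [Fin.snoc_castSucc]
    simp only [mulAt, Fin.succ_castSucc, Fin.snoc_castSucc, Fin.val_castSucc]

theorem mulAt_snoc_last {r : ℕ} (as : Fin (r + 1) → A) (b : A) :
    mulAt (Fin.snoc as b : Fin (r + 2) → A) (Fin.last r) =
      Fin.snoc (fun i : Fin r => as i.castSucc) (as (Fin.last r) * b) := by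
  funext j
  refine Fin.lastCases ?_ (fun j => ?_) j
  · rw [Fin.snoc_last, mulAt, if_neg (by simp), if_pos (by simp), Fin.succ_last,
      Fin.snoc_last, Fin.snoc_castSucc]
  · rw [Fin.snoc_castSucc, mulAt, if_pos (by simp), Fin.snoc_castSucc]

theorem row1 (r s : ℕ) :
    R.sig r s ∘ₗ d0 R r s + d0 R (r + 1) s ∘ₗ R.sig (r + 1) s = LinearMap.id := by
  apply X_ext_g S
  intro y as b h'
  simp only [LinearMap.comp_apply, LinearMap.id_apply, LinearMap.add_apply]
  have e2 : S.hE h' = S.ι ((1 : A) ⊗ₜ[k] h') := hE_apply S h'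
  rw [d0_g, sig_g, map_zsmul, e2, d0_g]
  simp only [map_add, map_sum, map_zsmul, sig_g, mul_one]
  rw [Fin.sum_univ_castSucc, mulAt_snoc_last]
  simp only [mulAt_snoc_castSucc, Fin.snoc_last, Fin.snoc_castSucc, ← e2]
  have h1 : (fun i : Fin (r + 1) => (Fin.snoc as b : Fin (r + 2) → A) i.succ) =
      Fin.snoc (fun i : Fin r => as i.succ) b := by
    funext j
    refine Fin.lastCases ?_ (fun j => ?_) j
    · rw [Fin.snoc_last, Fin.succ_last, Fin.snoc_last]
    · rw [Fin.snoc_castSucc, Fin.succ_castSucc, Fin.snoc_castSucc]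
  have h3 : (Fin.snoc as b : Fin (r + 2) → A) 0 = as 0 := rfl
  rw [h1, h3]
  simp only [smul_add, Finset.smul_sum, smul_smul, Fin.val_castSucc, Fin.val_last, ← pow_add]
  have e3 : ((-1 : ℤ) ^ (r + 1 + 1 + (r + 1 + 1))) = 1 := by
    rw [← two_mul, pow_mul]; simp
  have e4 : ((-1 : ℤ) ^ (r + 1 + (r + 1))) = 1 := by
    rw [← two_mul, pow_mul]; simp
  have e5 : ((-1 : ℤ) ^ (r + 1 + 1 + (r + 1))) = - 1 := by
    rw [show r + 1 + 1 + (r + 1) = (r + 1 + (r + 1)) + 1 by omega, pow_succ, e4]; simp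
  have e6 : ((-1 : ℤ) ^ (r + 1 + 1)) = - (-1 : ℤ) ^ (r + 1) := by
    rw [pow_succ]; simp
  have e7 : ∀ x : ℕ, ((-1 : ℤ) ^ (r + 1 + 1 + (x + 1))) = - (-1 : ℤ) ^ (x + 1 + (r + 1)) := by
    intro x
    rw [show r + 1 + 1 + (x + 1) = (x + 1 + (r + 1)) + 1 by omega, pow_succ]; simp
  have e8 : S.aE b * S.hE h' = S.ι (b ⊗ₜ[k] h') := (ι_eq S b h').symm
  simp only [e3, e4, e5, e6, e7, neg_smul, one_smul, Finset.sum_neg_distrib]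
  abel

theorem mu_d0 (s : ℕ) : R.mu s ∘ₗ d0 R 0 s = 0 := by
  apply X_ext_g S
  intro y as b h'
  simp only [LinearMap.comp_apply, LinearMap.zero_apply]
  rw [d0_g]
  simp only [Finset.univ_eq_empty, Finset.sum_empty, map_add, map_zsmul, mu_g, map_zero]
  rw [← aE_mul_ι, ← rN_rN, pN_rN_aE]
  simp

theorem rX_g {r s : ℕ} (as : Fin r → A) (x x' : E) (y : Nc k H E s) :
    rX x' (xg k A H E as x y) = xg k A H E as (x * x') y := by
  suffices rX x' ∘ₗ xg k A H E as x = xg k A H E (s := s) as (x * x') from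
    LinearMap.congr_fun this y
  apply N_ext
  intro e hs
  simp only [LinearMap.comp_apply, xg_tp]
  rfl

theorem lX_g {r s : ℕ} (as : Fin r → A) (x e : E) (y : Nc k H E s) :
    lX e (xg k A H E as x y) = xg k A H E as x (lN e y) := by
  suffices lX e ∘ₗ xg k A H E as x = xg k A H E (s := s) as x ∘ₗ lN e from
    LinearMap.congr_fun this y
  apply N_ext
  intro e hs
  simp only [LinearMap.comp_apply, xg_tp, lN_tmul]
  rfl

theorem lY_p {s : ℕ} (e : E) (y : Nc k H E (s + 1)) :
    lY e (projY k H E s y) = projY k H E s (lN e y) := by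
  suffices lY e ∘ₗ projY k H E s = projY k H E s ∘ₗ lN e from
    LinearMap.congr_fun this y
  apply N_ext
  intro e hs
  simp only [LinearMap.comp_apply, projY_tp, lN_tmul]
  rfl

theorem d0_lmul (r s : ℕ) (e : E) : d0 R r s ∘ₗ lX e = lX e ∘ₗ d0 R r s := R.dl_lmul 0 (r + 1) s e
theorem d0_rmul (r s : ℕ) (e : E) : d0 R r s ∘ₗ rX e = rX e ∘ₗ d0 R r s := R.dl_rmul 0 (r + 1) s e

/-- a generator of `X_{r+1,s}` in terms of the homotopy. -/
theorem xg_succ (r s : ℕ) (as : Fin (r + 1) → A) (x : E) (y : Nc k H E s) :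
    ∃ z, xg k A H E as x y = rX x (R.sig r s z) := by
  refine ⟨((-1 : ℤ) ^ (r + 1)) • xg k A H E (Fin.init as) (S.ι (as (Fin.last r) ⊗ₜ[k] 1)) y, ?_⟩
  rw [map_zsmul, sig_g, smul_smul, ← pow_add, ← two_mul, pow_mul]
  simp only [even_two, Even.neg_pow, one_pow, one_smul, hE_one, rX_g, one_mul, Fin.snoc_init_self]

theorem d0_d0 (r s : ℕ) : d0 R r s ∘ₗ d0 R (r + 1) s = 0 := by
  induction r with
  | zero =>
    apply X_ext_x
    intro y as x
    obtain ⟨z, hz⟩ := xg_succ R 1 s as x y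
    have h1 := LinearMap.congr_fun (row1 R 0 s) z
    have h2 := LinearMap.congr_fun (row0 R s) (d0 R 0 s z)
    have h3 := LinearMap.congr_fun (mu_d0 R s) z
    have c1 := LinearMap.congr_fun (d0_rmul R 1 s x) (R.sig 1 s z)
    have c2 := LinearMap.congr_fun (d0_rmul R 0 s x) (d0 R 1 s (R.sig 1 s z))
    simp only [LinearMap.comp_apply, LinearMap.id_apply, LinearMap.add_apply,
      LinearMap.zero_apply] at *
    rw [hz, c1, c2]
    rw [h3, map_zero, zero_add] at h2
    rw [← eq_sub_iff_add_eq'] at h1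
    rw [h1, map_sub, h2, sub_self, map_zero]
  | succ r ih =>
    apply X_ext_x
    intro y as x
    obtain ⟨z, hz⟩ := xg_succ R (r + 2) s as x y
    have h1 := LinearMap.congr_fun (row1 R (r + 1) s) z
    have h2 := LinearMap.congr_fun (row1 R r s) (d0 R (r + 1) s z)
    have h3 := LinearMap.congr_fun ih z
    have c1 := LinearMap.congr_fun (d0_rmul R (r + 2) s x) (R.sig (r + 2) s z)
    have c2 := LinearMap.congr_fun (d0_rmul R (r + 1) s x) (d0 R (r + 2) s (R.sig (r + 2) s z))
    simp only [LinearMap.comp_apply, LinearMap.id_apply, LinearMap.add_apply,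
      LinearMap.zero_apply] at *
    rw [hz, c1, c2]
    rw [h3, map_zero, zero_add] at h2
    rw [← eq_sub_iff_add_eq'] at h1
    rw [h1, map_sub, h2, sub_self, map_zero]

theorem mu_lX (s : ℕ) (e : E) : R.mu s ∘ₗ lX e = lY e ∘ₗ R.mu s := by
  apply X_ext_x
  intro y as x
  simp only [LinearMap.comp_apply, lX_g, mu_g, lY_p, pN_lin S s e y, rN_lin S x (s + 1) e _]

theorem sig_lX (r s : ℕ) (e : E) : R.sig r s ∘ₗ lX e = lX e ∘ₗ R.sig r s := by
  apply X_ext_g S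
  intro y as b h'
  simp only [LinearMap.comp_apply, lX_g, sig_g, map_zsmul]

theorem sig0_lY (s : ℕ) (e : E) : R.sig0 s ∘ₗ lY e = lX e ∘ₗ R.sig0 s := by
  apply Y_ext_p S
  intro y h'
  simp only [LinearMap.comp_apply]
  rw [sig0_g R s (fun i => i.elim0), lX_g, lY_p, ← rN_lin, ← pN_lin S s e y,
    sig0_g R s (fun i => i.elim0)]

theorem del_lY (s : ℕ) (e : E) : R.del s ∘ₗ lY e = lY e ∘ₗ R.del s := by
  apply Y_ext'
  intro y
  simp only [LinearMap.comp_apply, lY_p, del_projY, bN_lin S (s + 1) e y]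

theorem del_del (s : ℕ) : R.del s ∘ₗ R.del (s + 1) = 0 := by
  apply Y_ext'
  intro y
  simp only [LinearMap.comp_apply, del_projY, bN_bN, map_zero, LinearMap.zero_apply]

def RY (x : E) (s : ℕ) : Yc k H E s →ₗ[k] Yc k H E s := R.mu s ∘ₗ rX x ∘ₗ R.sig0 s

theorem RY_p (x : E) (s : ℕ) (y : Nc k H E (s + 1)) :
    RY R x s (projY k H E s y) = projY k H E s (rN S x (s + 1) y) := by
  suffices RY R x s ∘ₗ projY k H E s = projY k H E s ∘ₗ rN S x (s + 1) from
    LinearMap.congr_fun this y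
  apply N_ext
  intro e hs'
  obtain ⟨hs, h', rfl⟩ : ∃ (hs : Fin s → H) (h' : H), hs' = Fin.snoc hs h' :=
    ⟨Fin.init hs', hs' (Fin.last _), (Fin.snoc_init_self hs').symm⟩
  simp only [LinearMap.comp_apply, RY]
  rw [← rN_hE_pN S, sig0_g R s (fun i => i.elim0), rX_g, mu_g, rN_rN]

theorem mu_rX (s : ℕ) (x : E) : R.mu s ∘ₗ rX x = RY R x s ∘ₗ R.mu s := by
  apply LinearMap.ext
  intro z
  have h1 := LinearMap.congr_fun (row0 R s) z
  have h2 := LinearMap.congr_fun (d0_rmul R 0 s x) (R.sig 0 s z)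
  have h3 := LinearMap.congr_fun (mu_d0 R s) (rX x (R.sig 0 s z))
  simp only [LinearMap.comp_apply, LinearMap.id_apply, LinearMap.add_apply,
      LinearMap.zero_apply, RY] at *
  conv_lhs => rw [← h1]
  rw [map_add, map_add, ← h2, h3, add_zero]

theorem del_RY (s : ℕ) (x : E) : R.del s ∘ₗ RY R x (s + 1) = RY R x s ∘ₗ R.del s := by
  apply Y_ext'
  intro y
  simp only [LinearMap.comp_apply, RY_p, del_projY, bN_rN]

section Col
variable (sY : ∀ s : ℕ, Yc k H E s →ₗ[k] Yc k H E (s + 1))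
    (hsY : ∀ (s : ℕ) (e : E) (hs : Fin s → H) (h : H),
      sY s (ygen e hs h) = ((-1 : ℤ) ^ s) • ygen e (Fin.snoc hs h) 1)

theorem sY_p (S : CrossedProduct k A H E) (hsY : ∀ (s : ℕ) (e : E) (hs : Fin s → H) (h : H),
      sY s (ygen e hs h) = ((-1 : ℤ) ^ s) • ygen e (Fin.snoc hs h) 1) (s : ℕ)
    (y : Nc k H E (s + 1)) :
    sY s (projY k H E s y) = ((-1 : ℤ) ^ s) • projY k H E (s + 1) (pN S (s + 1) y) := by
  suffices sY s ∘ₗ projY k H E s = ((-1 : ℤ) ^ s) • projY k H E (s + 1) ∘ₗ pN S (s + 1) from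
    LinearMap.congr_fun this y
  apply N_ext
  intro e hs'
  obtain ⟨hs, h', rfl⟩ : ∃ (hs : Fin s → H) (h' : H), hs' = Fin.snoc hs h' :=
    ⟨Fin.init hs', hs' (Fin.last _), (Fin.snoc_init_self hs').symm⟩
  simp only [LinearMap.comp_apply, LinearMap.smul_apply, pN_tp, projY_snoc, hsY]

theorem col_succ (hsY : ∀ (s : ℕ) (e : E) (hs : Fin s → H) (h : H),
      sY s (ygen e hs h) = ((-1 : ℤ) ^ s) • ygen e (Fin.snoc hs h) 1) (s : ℕ) :
    sY s ∘ₗ R.del s + R.del (s + 1) ∘ₗ sY (s + 1) = LinearMap.id := by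
  apply Y_ext'
  intro y
  simp only [LinearMap.comp_apply, LinearMap.add_apply, LinearMap.id_apply, del_projY,
    sY_p sY S hsY, map_zsmul, bN_pN, map_add, smul_add, smul_smul, ← pow_add]
  rw [← two_mul, pow_mul, pow_succ]
  simp

theorem sY_lY (S : CrossedProduct k A H E) (hsY : ∀ (s : ℕ) (e : E) (hs : Fin s → H) (h : H),
      sY s (ygen e hs h) = ((-1 : ℤ) ^ s) • ygen e (Fin.snoc hs h) 1) (s : ℕ) (e : E) :
    sY s ∘ₗ lY e = lY e ∘ₗ sY s := by
  apply Y_ext'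
  intro y
  simp only [LinearMap.comp_apply, lY_p, sY_p sY S hsY, map_zsmul, pN_lin S (s + 1) e y]

end Col

section Aug
variable (mutil : Yc k H E 0 →ₗ[k] E)

theorem mutil_g (hmutil : ∀ (a : A) (h₀ h₁ : H) (N M' : ℕ) (u : Fin N → Fin 2 → H)
      (v : Fin M' → Fin 2 → H), SRep k 1 h₀ N u → SRep k 1 h₁ M' v →
      mutil (ygen (S.ι (a ⊗ₜ[k] h₀)) (fun i : Fin 0 => i.elim0) h₁) =
        - ∑ i, ∑ j, S.ι ((a * S.f (u i 0) (v j 0)) ⊗ₜ[k] (u i 1 * v j 1)))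
    (e : E) (hs : Fin 0 → H) (h : H) : mutil (ygen e hs h) = - (e * S.hE h) := by
  have hhs : hs = fun i => i.elim0 := funext fun i => i.elim0
  subst hhs
  induction e using E_ind S with
  | h0 => simp only [ygen, TensorProduct.zero_tmul, map_zero, zero_mul, neg_zero]
  | hadd y z hy hz =>
    simp only [ygen, TensorProduct.add_tmul, map_add, add_mul, neg_add] at *
    rw [hy, hz]
  | hι a h₀ =>
    obtain ⟨N, u, hu⟩ := srep_exists (k := k) 1 h₀
    obtain ⟨N', u', hu'⟩ := srep_exists (k := k) 1 h
    rw [hmutil a h₀ h N N' u u' hu hu', ι_mul_hE S a h₀ h N N' u u' hu hu']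

theorem mutil_del0 (hm : ∀ (e : E) (hs : Fin 0 → H) (h : H),
      mutil (ygen e hs h) = - (e * S.hE h)) (σm : E →ₗ[k] Yc k H E 0)
    (hσm : ∀ e : E, σm e = - ygen e (fun i : Fin 0 => i.elim0) 1) (y : Nc k H E 1) :
    σm (mutil (projY k H E 0 y)) = - projY k H E 0 (pN S 0 (bN S 0 y)) := by
  suffices σm ∘ₗ mutil ∘ₗ projY k H E 0 = - projY k H E 0 ∘ₗ pN S 0 ∘ₗ bN S 0 from
    LinearMap.congr_fun this y
  apply N_ext
  intro e hs
  simp only [LinearMap.comp_apply, LinearMap.neg_apply]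
  rw [projY_tp, hm, hσm, bN, LinearMap.neg_apply, tp_succ, act1_tmul, map_neg, map_neg, pN_tp,
    projY_snoc]
  simp only [ygen, TensorProduct.neg_tmul, neg_neg]
  rfl

theorem col_zero (hm : ∀ (e : E) (hs : Fin 0 → H) (h : H),
      mutil (ygen e hs h) = - (e * S.hE h)) (σm : E →ₗ[k] Yc k H E 0)
    (hσm : ∀ e : E, σm e = - ygen e (fun i : Fin 0 => i.elim0) 1)
    (sY : ∀ s : ℕ, Yc k H E s →ₗ[k] Yc k H E (s + 1))
    (hsY : ∀ (s : ℕ) (e : E) (hs : Fin s → H) (h : H),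
      sY s (ygen e hs h) = ((-1 : ℤ) ^ s) • ygen e (Fin.snoc hs h) 1) :
    σm ∘ₗ mutil + R.del 0 ∘ₗ sY 0 = LinearMap.id := by
  apply Y_ext'
  intro y
  simp only [LinearMap.comp_apply, LinearMap.add_apply, LinearMap.id_apply,
    sY_p sY S hsY, map_zsmul, del_projY, bN_pN, map_add, mutil_del0 mutil hm σm hσm]
  simp

theorem mutil_mu (hm : ∀ (e : E) (hs : Fin 0 → H) (h : H),
      mutil (ygen e hs h) = - (e * S.hE h))
    (mult : Xc k A H E 0 0 →ₗ[k] E)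
    (hmult : ∀ e e' : E,
      mult (xgen e (fun i : Fin 0 => i.elim0) (fun i : Fin 0 => i.elim0) e') = e * e') :
    mutil ∘ₗ R.mu 0 = - mult := by
  apply X_ext
  intro e hs as x
  have hhs : hs = fun i => i.elim0 := funext fun i => i.elim0
  have has : as = fun i => i.elim0 := funext fun i => i.elim0
  subst hhs has
  induction x using E_ind S with
  | h0 => simp only [xgen_zero_right, map_zero]
  | hadd y z hy hz => simp only [xgen_add_right, map_add, hy, hz]
  | hι b h' =>
    simp only [LinearMap.comp_apply, LinearMap.neg_apply]
    rw [hmult, ← xg_tp, mu_g, ι_eq, ← rN_rN, pN_rN_aE, rN_zero, rN_hE_pN, projY_snoc, hm, mul_assoc]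

end Aug

end AuxD

section AuxZ
variable {k A H E : Type} [CommRing k] [Ring A] [Algebra k A] [Ring H] [HopfAlgebra k H]
  [Ring E] [Algebra k E]

theorem perturb {P : Type} [Ring P] (d s D t : P) (h1 : d * s + s * d = 1) (h2 : d * d = 0)
    (h3 : (d + D) * (d + D) = 0) (ht : t = s - s * D * t)
    (hN : ∀ w : P, w + s * D * w = 0 → w = 0) : (d + D) * t + t * (d + D) = 1 := by
  have key := hN ((d + D) * t + t * (d + D) - 1) (by
    have e1 : s * D * t = s - t := by rw [eq_sub_iff_add_eq, add_comm, ← eq_sub_iff_add_eq]; exact ht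
    have e2 : s * d = 1 - d * s := by rw [eq_sub_iff_add_eq, add_comm]; exact h1
    have e3 : s * D * ((d + D) * t) = - (s * d * ((d + D) * t)) := by
      have : s * ((d + D) * (d + D)) * t = 0 := by rw [h3]; simp
      rw [← sub_eq_zero, ← this]; noncomm_ring
    have e4 : s * D * (t * (d + D)) = (s - t) * (d + D) := by rw [← mul_assoc, e1]
    have e5 : d * (s * (d + D) * t) = d * s := by
      have : s * (d + D) * t = t - d * s * t + (s - t) := by
        rw [← e1, mul_add, e2, add_mul, sub_mul, one_mul]
      rw [this]
      have : d * (t - d * s * t + (s - t)) = d * s - (d * d) * s * t := by noncomm_ring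
      rw [this, h2]; simp
    have e6 : s * d * ((d + D) * t) = (d + D) * t - d * s := by
      rw [e2, sub_mul, one_mul]
      congr 1
      conv_rhs => rw [← e5]
      noncomm_ring
    have e7 : s * D * ((d + D) * t + t * (d + D) - 1) = s * D * ((d + D) * t)
        + s * D * (t * (d + D)) - s * D := by noncomm_ring
    rw [e7, e3, e4, e6, sub_mul, mul_add s, e2]
    abel)
  exact sub_eq_zero.mp key

variable (k A H E) in
abbrev ZX : Type := ⨁ (p : ℕ × ℕ), Xc k A H E p.1 p.2
variable (k H E) in
abbrev ZY : Type := ⨁ (s : ℕ), Yc k H E s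
variable (k A H E) in
def Zt : Type := ZX k A H E × ZY k H E
instance : AddCommGroup (Zt k A H E) := inferInstanceAs (AddCommGroup (ZX k A H E × ZY k H E))
instance : Module k (Zt k A H E) := inferInstanceAs (Module k (ZX k A H E × ZY k H E))

variable (k A H E) in
def jX (r s : ℕ) : Xc k A H E r s →ₗ[k] Zt k A H E :=
  (LinearMap.inl k (ZX k A H E) (ZY k H E)) ∘ₗ
    (DirectSum.lof k (ℕ × ℕ) (fun p : ℕ × ℕ => Xc k A H E p.1 p.2) (r, s))
variable (k A H E) in
def jY (s : ℕ) : Yc k H E s →ₗ[k] Zt k A H E :=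
  (LinearMap.inr k (ZX k A H E) (ZY k H E)) ∘ₗ
    (DirectSum.lof k ℕ (fun s => Yc k H E s) s)

variable {M : Type} [AddCommGroup M] [Module k M]

def mkZ (fX : ∀ r s, Xc k A H E r s →ₗ[k] M) (fY : ∀ s, Yc k H E s →ₗ[k] M) :
    Zt k A H E →ₗ[k] M :=
  LinearMap.coprod (M := ZX k A H E) (M₂ := ZY k H E)
    (DirectSum.toModule k (ℕ × ℕ) M (fun p => fX p.1 p.2)) (DirectSum.toModule k ℕ M fY)

theorem mkZ_jX (fX : ∀ r s, Xc k A H E r s →ₗ[k] M) (fY : ∀ s, Yc k H E s →ₗ[k] M) (r s : ℕ)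
    (x : Xc k A H E r s) : mkZ fX fY (jX k A H E r s x) = fX r s x := by
  have := DirectSum.toModule_lof (ι := ℕ × ℕ) (M := fun p : ℕ × ℕ => Xc k A H E p.1 p.2) k
    (φ := fun p => fX p.1 p.2) (r, s) x
  refine Eq.trans ?_ this
  exact LinearMap.congr_fun (LinearMap.coprod_inl (M := ZX k A H E) (M₂ := ZY k H E)
    (DirectSum.toModule k (ℕ × ℕ) M (fun p => fX p.1 p.2)) (DirectSum.toModule k ℕ M fY)) _

theorem mkZ_jY (fX : ∀ r s, Xc k A H E r s →ₗ[k] M) (fY : ∀ s, Yc k H E s →ₗ[k] M) (s : ℕ)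
    (x : Yc k H E s) : mkZ fX fY (jY k A H E s x) = fY s x := by
  have := DirectSum.toModule_lof (ι := ℕ) (M := fun p : ℕ => Yc k H E p) k
    (φ := fY) s x
  refine Eq.trans ?_ this
  exact LinearMap.congr_fun (LinearMap.coprod_inr (M := ZX k A H E) (M₂ := ZY k H E)
    (DirectSum.toModule k (ℕ × ℕ) M (fun p => fX p.1 p.2)) (DirectSum.toModule k ℕ M fY)) _

theorem Z_ext {f g : Zt k A H E →ₗ[k] M}
    (hX : ∀ r s x, f (jX k A H E r s x) = g (jX k A H E r s x))
    (hY : ∀ s x, f (jY k A H E s x) = g (jY k A H E s x)) : f = g := by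
  refine LinearMap.prod_ext (M := ZX k A H E) (M₂ := ZY k H E) ?_ ?_
  · apply DirectSum.linearMap_ext
    rintro ⟨r, s⟩
    apply LinearMap.ext
    intro x
    exact hX r s x
  · apply DirectSum.linearMap_ext
    intro s
    apply LinearMap.ext
    intro x
    exact hY s x

theorem jX_cast {r r' s s' : ℕ} (hr : r = r') (hs : s = s') (x : Xc k A H E r s) :
    jX k A H E r' s' (xcast hr hs x) = jX k A H E r s x := by
  subst hr hs; rfl

/-- the filtration -/
def Fil (m : ℕ) : Submodule k (Zt k A H E) :=
  Submodule.span k ({z | ∃ r s x, s < m ∧ z = jX k A H E r s x} ∪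
    {z | ∃ s x, s < m ∧ z = jY k A H E s x})

theorem Fil_X {m r s : ℕ} (h : s < m) (x : Xc k A H E r s) : jX k A H E r s x ∈ Fil m :=
  Submodule.subset_span (Or.inl ⟨r, s, x, h, rfl⟩)
theorem Fil_Y {m s : ℕ} (h : s < m) (x : Yc k H E s) : jY k A H E s x ∈ Fil m :=
  Submodule.subset_span (Or.inr ⟨s, x, h, rfl⟩)

theorem Fil_mono {m n : ℕ} (h : m ≤ n) : Fil (k := k) (A := A) (H := H) (E := E) m ≤ Fil n := by
  apply Submodule.span_le.mpr
  rintro z (⟨r, s, x, h1, rfl⟩ | ⟨s, x, h1, rfl⟩)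
  · exact Fil_X (by omega) x
  · exact Fil_Y (by omega) x

theorem Fil_zero : Fil (k := k) (A := A) (H := H) (E := E) 0 = ⊥ := by
  rw [eq_bot_iff]
  apply Submodule.span_le.mpr
  rintro z (⟨r, s, x, h1, rfl⟩ | ⟨s, x, h1, rfl⟩)
  · omega
  · omega

theorem Fil_map {m n : ℕ} (f : Zt k A H E →ₗ[k] Zt k A H E)
    (hX : ∀ r s x, s < m → f (jX k A H E r s x) ∈ Fil n)
    (hY : ∀ s x, s < m → f (jY k A H E s x) ∈ Fil n) (z : Zt k A H E) (hz : z ∈ Fil m) :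
    f z ∈ Fil n := by
  have : Fil m ≤ (Fil n).comap f := by
    apply Submodule.span_le.mpr
    rintro z (⟨r, s, x, h1, rfl⟩ | ⟨s, x, h1, rfl⟩)
    · exact hX r s x h1
    · exact hY s x h1
  exact this hz

theorem Fil_exh (z : Zt k A H E) : ∃ m, z ∈ Fil m := by
  let U : Submodule k (Zt k A H E) := ⨆ m, Fil m
  have hU : U.mkQ = 0 := by
    apply Z_ext
    · intro r s x
      rw [LinearMap.zero_apply, Submodule.mkQ_apply, Submodule.Quotient.mk_eq_zero]
      exact Submodule.mem_iSup_of_mem (s + 1) (Fil_X (by omega) x)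
    · intro s x
      rw [LinearMap.zero_apply, Submodule.mkQ_apply, Submodule.Quotient.mk_eq_zero]
      exact Submodule.mem_iSup_of_mem (s + 1) (Fil_Y (by omega) x)
  have hz : z ∈ U := by
    rw [← Submodule.Quotient.mk_eq_zero, ← Submodule.mkQ_apply, hU, LinearMap.zero_apply]
  refine (Submodule.mem_iSup_of_directed _ ?_).mp hz
  exact directed_of_isDirected_le fun m n h => Fil_mono h

variable {S : CrossedProduct k A H E} (R : ResData k A H E S)

def D0c (r s : ℕ) : Xc k A H E r s →ₗ[k] Zt k A H E :=
  match r with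
  | 0 => jY k A H E s ∘ₗ R.mu s
  | r + 1 => jX k A H E r s ∘ₗ d0 R r s

def D1c (s : ℕ) : Yc k H E s →ₗ[k] Zt k A H E :=
  match s with
  | 0 => 0
  | s + 1 => jY k A H E s ∘ₗ R.del s

def D0 : Module.End k (Zt k A H E) := mkZ (D0c R) (fun _ => 0)
def Dl (l : ℕ) : Module.End k (Zt k A H E) := mkZ (fun r s => jX k A H E _ _ ∘ₗ R.dl l r s) (fun _ => 0)
def D1 : Module.End k (Zt k A H E) :=
  mkZ (fun r s => ∑ l ∈ Finset.range s, jX k A H E _ _ ∘ₗ R.dl (l + 1) r s) (D1c R)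
def S0 : Module.End k (Zt k A H E) :=
  mkZ (fun r s => jX k A H E _ _ ∘ₗ R.sig r s) (fun s => jX k A H E _ _ ∘ₗ R.sig0 s)

theorem Dl_X (l r s : ℕ) (x : Xc k A H E r s) :
    Dl R l (jX k A H E r s x) = jX k A H E _ _ (R.dl l r s x) := by
  rw [Dl, mkZ_jX]; rfl
theorem S0_X (r s : ℕ) (x : Xc k A H E r s) :
    S0 R (jX k A H E r s x) = jX k A H E _ _ (R.sig r s x) := by
  rw [S0, mkZ_jX]; rfl
theorem S0_Y (s : ℕ) (x : Yc k H E s) :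
    S0 R (jY k A H E s x) = jX k A H E _ _ (R.sig0 s x) := by
  rw [S0, mkZ_jY]; rfl
theorem D0_X0 (s : ℕ) (x : Xc k A H E 0 s) :
    D0 R (jX k A H E 0 s x) = jY k A H E _ (R.mu s x) := by
  rw [D0, mkZ_jX]; rfl
theorem D0_X (r s : ℕ) (x : Xc k A H E (r + 1) s) :
    D0 R (jX k A H E (r + 1) s x) = jX k A H E r s (d0 R r s x) := by
  rw [D0, mkZ_jX]; rfl
theorem D0_Xl (r s : ℕ) (x : Xc k A H E (r + 1) s) :
    D0 R (jX k A H E (r + 1) s x) = Dl R 0 (jX k A H E (r + 1) s x) := by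
  rw [Dl_X, D0_X]; rfl
theorem D0_Y (s : ℕ) (x : Yc k H E s) : D0 R (jY k A H E s x) = 0 := by
  rw [D0, mkZ_jY]; rfl
theorem D1_X (r s : ℕ) (x : Xc k A H E r s) :
    D1 R (jX k A H E r s x) = ∑ l ∈ Finset.range s, Dl R (l + 1) (jX k A H E r s x) := by
  rw [D1, mkZ_jX, LinearMap.sum_apply]
  refine Finset.sum_congr rfl fun l _ => ?_
  rw [Dl_X]; rfl
theorem D1_Y0 (x : Yc k H E 0) : D1 R (jY k A H E 0 x) = 0 := by
  rw [D1, mkZ_jY]; rfl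
theorem D1_Y (s : ℕ) (x : Yc k H E (s + 1)) :
    D1 R (jY k A H E (s + 1) x) = jY k A H E s (R.del s x) := by
  rw [D1, mkZ_jY]; rfl

theorem D0S0 : D0 R * S0 R + S0 R * D0 R = 1 := by
  apply Z_ext
  · intro r s x
    simp only [LinearMap.add_apply, Module.End.mul_apply, Module.End.one_apply]
    cases r with
    | zero =>
      rw [S0_X, D0_X, D0_X0, S0_Y, ← map_add]
      congr 1
      rw [add_comm]
      exact LinearMap.congr_fun (row0 R s) x
    | succ r =>
      rw [S0_X, D0_X, D0_X, S0_X, ← map_add]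
      congr 1
      refine (add_comm _ _).trans ?_
      exact LinearMap.congr_fun (row1 R r s) x
  · intro s x
    simp only [LinearMap.add_apply, Module.End.mul_apply, Module.End.one_apply]
    rw [S0_Y, D0_X0, D0_Y, map_zero, add_zero]
    congr 1
    exact LinearMap.congr_fun (mu_sig0 R s) x

theorem D0D0 : D0 R * D0 R = 0 := by
  apply Z_ext
  · intro r s x
    simp only [Module.End.mul_apply, LinearMap.zero_apply]
    rcases r with _ | _ | r
    · rw [D0_X0, D0_Y]
    · rw [D0_X, D0_X0]
      have := LinearMap.congr_fun (mu_d0 R s) x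
      rw [LinearMap.comp_apply] at this
      rw [this, LinearMap.zero_apply, map_zero]
    · rw [D0_X, D0_X]
      have := LinearMap.congr_fun (d0_d0 R r s) x
      rw [LinearMap.comp_apply] at this
      rw [this, LinearMap.zero_apply, map_zero]
  · intro s x
    simp only [Module.End.mul_apply, LinearMap.zero_apply]
    rw [D0_Y, map_zero]

theorem D1_Fil (m : ℕ) (z : Zt k A H E) (hz : z ∈ Fil (m + 1)) : D1 R z ∈ Fil m := by
  refine Fil_map (D1 R) ?_ ?_ z hz
  · intro r s x h
    rw [D1_X]
    refine Submodule.sum_mem _ fun l hl => ?_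
    rw [Finset.mem_range] at hl
    rw [Dl_X]
    exact Fil_X (by omega) _
  · intro s x h
    cases s with
    | zero => rw [D1_Y0]; exact Submodule.zero_mem _
    | succ s => rw [D1_Y]; exact Fil_Y (by omega) _

theorem S0_Fil (m : ℕ) (z : Zt k A H E) (hz : z ∈ Fil m) : S0 R z ∈ Fil m := by
  refine Fil_map (S0 R) ?_ ?_ z hz
  · intro r s x h
    rw [S0_X]
    exact Fil_X h _
  · intro s x h
    rw [S0_Y]
    exact Fil_X h _

theorem nilp (w : Zt k A H E) (hw : w + S0 R (D1 R w) = 0) : w = 0 := by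
  obtain ⟨m, hm⟩ := Fil_exh w
  induction m with
  | zero => rw [Fil_zero] at hm; exact (Submodule.mem_bot k).mp hm
  | succ m ih =>
    apply ih
    rw [eq_neg_of_add_eq_zero_left hw]
    exact Submodule.neg_mem _ (S0_Fil R m _ (D1_Fil R m _ hm))

theorem nilp_end (w : Module.End k (Zt k A H E)) (hw : w + S0 R * D1 R * w = 0) : w = 0 := by
  apply LinearMap.ext
  intro z
  exact nilp R (w z) (LinearMap.congr_fun hw z)

end AuxZ

section AuxW
variable {k A H E : Type} [CommRing k] [Ring A] [Algebra k A] [Ring H] [HopfAlgebra k H]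
  [Ring E] [Algebra k E] {S : CrossedProduct k A H E} (R : ResData k A H E S)

variable (k A H) in
def LZ (e : E) : Module.End k (Zt k A H E) :=
  mkZ (fun r s => jX k A H E r s ∘ₗ lX e) (fun s => jY k A H E s ∘ₗ lY e)
def RZ (e : E) : Module.End k (Zt k A H E) :=
  mkZ (fun r s => jX k A H E r s ∘ₗ rX e) (fun s => jY k A H E s ∘ₗ RY R e s)

theorem LZ_X (e : E) (r s : ℕ) (x : Xc k A H E r s) :
    LZ k A H e (jX k A H E r s x) = jX k A H E r s (lX e x) := by rw [LZ, mkZ_jX]; rfl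
theorem LZ_Y (e : E) (s : ℕ) (x : Yc k H E s) :
    LZ k A H e (jY k A H E s x) = jY k A H E s (lY e x) := by rw [LZ, mkZ_jY]; rfl
theorem RZ_X (e : E) (r s : ℕ) (x : Xc k A H E r s) :
    RZ R e (jX k A H E r s x) = jX k A H E r s (rX e x) := by rw [RZ, mkZ_jX]; rfl
theorem RZ_Y (e : E) (s : ℕ) (x : Yc k H E s) :
    RZ R e (jY k A H E s x) = jY k A H E s (RY R e s x) := by rw [RZ, mkZ_jY]; rfl

theorem L_Dl (e : E) (l r s : ℕ) (x : Xc k A H E r s) :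
    LZ k A H e (Dl R l (jX k A H E r s x)) = Dl R l (jX k A H E r s (lX e x)) := by
  rw [Dl_X, LZ_X, Dl_X]
  congr 1
  exact (LinearMap.congr_fun (R.dl_lmul l r s e) x).symm
theorem R_Dl (e : E) (l r s : ℕ) (x : Xc k A H E r s) :
    RZ R e (Dl R l (jX k A H E r s x)) = Dl R l (jX k A H E r s (rX e x)) := by
  rw [Dl_X, RZ_X, Dl_X]
  congr 1
  exact (LinearMap.congr_fun (R.dl_rmul l r s e) x).symm

theorem L_D0 (e : E) : LZ k A H e * D0 R = D0 R * LZ k A H e := by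
  apply Z_ext
  · intro r s x
    simp only [Module.End.mul_apply]
    cases r with
    | zero =>
      rw [D0_X0, LZ_X, LZ_Y, D0_X0]
      congr 1
      exact (LinearMap.congr_fun (mu_lX R s e) x).symm
    | succ r => rw [D0_Xl, L_Dl, LZ_X, D0_Xl]
  · intro s x
    simp only [Module.End.mul_apply]
    rw [D0_Y, LZ_Y, D0_Y, map_zero]
theorem R_D0 (e : E) : RZ R e * D0 R = D0 R * RZ R e := by
  apply Z_ext
  · intro r s x
    simp only [Module.End.mul_apply]
    cases r with
    | zero =>
      rw [D0_X0, RZ_X, RZ_Y, D0_X0]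
      congr 1
      exact (LinearMap.congr_fun (mu_rX R s e) x).symm
    | succ r => rw [D0_Xl, R_Dl, RZ_X, D0_Xl]
  · intro s x
    simp only [Module.End.mul_apply]
    rw [D0_Y, RZ_Y, D0_Y, map_zero]
theorem L_D1 (e : E) : LZ k A H e * D1 R = D1 R * LZ k A H e := by
  apply Z_ext
  · intro r s x
    simp only [Module.End.mul_apply]
    rw [D1_X, LZ_X, D1_X, map_sum]
    exact Finset.sum_congr rfl fun l _ => L_Dl R e _ _ _ _
  · intro s x
    simp only [Module.End.mul_apply]
    cases s with
    | zero => rw [D1_Y0, LZ_Y, D1_Y0, map_zero]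
    | succ s =>
      rw [D1_Y, LZ_Y, LZ_Y, D1_Y]
      congr 1
      exact (LinearMap.congr_fun (del_lY R s e) x).symm
theorem R_D1 (e : E) : RZ R e * D1 R = D1 R * RZ R e := by
  apply Z_ext
  · intro r s x
    simp only [Module.End.mul_apply]
    rw [D1_X, RZ_X, D1_X, map_sum]
    exact Finset.sum_congr rfl fun l _ => R_Dl R e _ _ _ _
  · intro s x
    simp only [Module.End.mul_apply]
    cases s with
    | zero => rw [D1_Y0, RZ_Y, D1_Y0, map_zero]
    | succ s =>
      rw [D1_Y, RZ_Y, RZ_Y, D1_Y]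
      congr 1
      exact (LinearMap.congr_fun (del_RY R s e) x).symm
theorem L_S0 (e : E) : LZ k A H e * S0 R = S0 R * LZ k A H e := by
  apply Z_ext
  · intro r s x
    simp only [Module.End.mul_apply]
    rw [S0_X, LZ_X, LZ_X, S0_X]
    congr 1
    exact (LinearMap.congr_fun (sig_lX R r s e) x).symm
  · intro s x
    simp only [Module.End.mul_apply]
    rw [S0_Y, LZ_X, LZ_Y, S0_Y]
    congr 1
    exact (LinearMap.congr_fun (sig0_lY R s e) x).symm

theorem D1_Dl (m r s : ℕ) (x : Xc k A H E r s) :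
    D1 R (Dl R m (jX k A H E r s x)) =
      ∑ l ∈ Finset.range (s - m), Dl R (l + 1) (Dl R m (jX k A H E r s x)) := by
  rw [Dl_X, D1_X]

theorem Ddl_succ (l r s : ℕ) (hl : 1 ≤ l) (hls : l ≤ s) (hs : Fin s → H) (as : Fin (r + 1) → A) :
    Dl R l (jX k A H E (r + 1) s (xgen (1 : E) hs as (1 : E))) =
      - ∑ j ∈ Finset.range l, S0 R (Dl R (l - j) (Dl R j
        (jX k A H E (r + 1) s (xgen (1 : E) hs as (1 : E))))) := by
  rw [Finset.sum_range, Dl_X, R.dl_succ l r s hl hls, map_neg, map_sum]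
  congr 1
  refine Finset.sum_congr rfl fun j _ => ?_
  rw [jX_cast, ← S0_X, jX_cast, ← Dl_X, jX_cast, ← Dl_X]

theorem Ddl_zero (l s : ℕ) (hl : 2 ≤ l) (hls : l ≤ s) (hs : Fin s → H) (as : Fin 0 → A) :
    Dl R l (jX k A H E 0 s (xgen (1 : E) hs as (1 : E))) =
      - ∑ j ∈ Finset.range (l - 1), S0 R (Dl R (l - (j + 1)) (Dl R (j + 1)
        (jX k A H E 0 s (xgen (1 : E) hs as (1 : E))))) := by
  have has : as = fun i => i.elim0 := funext fun i => i.elim0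
  subst has
  rw [Finset.sum_range, Dl_X, R.dl_zero l s hl hls, map_neg, map_sum]
  congr 1
  refine Finset.sum_congr rfl fun j _ => ?_
  rw [jX_cast, ← S0_X, jX_cast, ← Dl_X, jX_cast, ← Dl_X]

theorem Ddl_one (s : ℕ) (hs : Fin (s + 1) → H) (as : Fin 0 → A) :
    Dl R 1 (jX k A H E 0 (s + 1) (xgen (1 : E) hs as (1 : E))) =
      - S0 R (D1 R (D0 R (jX k A H E 0 (s + 1) (xgen (1 : E) hs as (1 : E))))) := by
  have has : as = fun i => i.elim0 := funext fun i => i.elim0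
  subst has
  rw [Dl_X, R.dl_one_zero s, map_neg, D0_X0, D1_Y, S0_Y]
  rfl

theorem gen_eq (r s : ℕ) (hs : Fin s → H) (as : Fin r → A) :
    D1 R (jX k A H E r s (xgen (1 : E) hs as (1 : E))) =
      - S0 R (D1 R ((D0 R + D1 R) (jX k A H E r s (xgen (1 : E) hs as (1 : E))))) := by
  cases r with
  | succ r =>
    have h1 : (D0 R + D1 R) (jX k A H E (r + 1) s (xgen (1 : E) hs as (1 : E))) =
        ∑ j ∈ Finset.range (s + 1), Dl R j
          (jX k A H E (r + 1) s (xgen (1 : E) hs as (1 : E))) := by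
      rw [LinearMap.add_apply, D0_Xl, D1_X, Finset.sum_range_succ', add_comm]
    rw [h1, D1_X, map_sum, map_sum, Finset.sum_range_succ, D1_Dl R s, Nat.sub_self,
      Finset.sum_range_zero, map_zero, add_zero]
    simp only [D1_Dl, map_sum]
    rw [← Finset.sum_range_diag_flip s (fun j m => S0 R (Dl R (m + 1) (Dl R j
          (jX k A H E (r + 1) s (xgen (1 : E) hs as (1 : E)))))), ← Finset.sum_neg_distrib]
    refine Finset.sum_congr rfl fun l hl => ?_
    rw [Finset.mem_range] at hl
    rw [Ddl_succ R (l + 1) r s (by omega) (by omega)]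
    congr 1
    refine Finset.sum_congr rfl fun j hj => ?_
    rw [Finset.mem_range] at hj
    rw [show l + 1 - j = l - j + 1 by omega]
  | zero =>
    cases s with
    | zero =>
      rw [LinearMap.add_apply, D0_X0, D1_X]
      simp only [Finset.sum_range_zero, add_zero, D1_Y0, map_zero, neg_zero]
    | succ s =>
      rw [LinearMap.add_apply, map_add, map_add, neg_add, ← Ddl_one]
      rw [D1_X, map_sum, map_sum, Finset.sum_range_succ', add_comm, zero_add]
      congr 1
      rw [Finset.sum_range_succ, D1_Dl R (s + 1), Nat.sub_self,
        Finset.sum_range_zero, map_zero, add_zero]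
      simp only [D1_Dl, map_sum, Nat.add_sub_add_right]
      rw [← Finset.sum_range_diag_flip s (fun j m => S0 R (Dl R (m + 1) (Dl R (j + 1)
          (jX k A H E 0 (s + 1) (xgen (1 : E) hs as (1 : E)))))), ← Finset.sum_neg_distrib]
      refine Finset.sum_congr rfl fun l hl => ?_
      rw [Finset.mem_range] at hl
      rw [Ddl_zero R (l + 1 + 1) (s + 1) (by omega) (by omega)]
      congr 1
      refine Finset.sum_congr rfl fun j hj => ?_
      rw [Finset.mem_range] at hj
      rw [show l + 1 + 1 - (j + 1) = l - j + 1 by omega]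

theorem gen_step (x : Zt k A H E) (hx : D1 R x = - S0 R (D1 R ((D0 R + D1 R) x)))
    (hD : (D0 R + D1 R) ((D0 R + D1 R) ((D0 R + D1 R) x)) = 0) :
    (D0 R + D1 R) ((D0 R + D1 R) x) = 0 := by
  obtain ⟨v, hv⟩ : ∃ v, v = (D0 R + D1 R) x := ⟨_, rfl⟩
  obtain ⟨w, hw⟩ : ∃ w, w = (D0 R + D1 R) v := ⟨_, rfl⟩
  rw [← hv] at hx hD ⊢
  rw [← hw] at hD ⊢
  have a1 : ∀ z, D0 R (S0 R z) + S0 R (D0 R z) = z := fun z =>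
    LinearMap.congr_fun (D0S0 R) z
  have a2 : ∀ z, D0 R (D0 R z) = 0 := fun z => LinearMap.congr_fun (D0D0 R) z
  have b1 : S0 R w = D0 R (x - S0 R v) := by
    have c1 : S0 R (D0 R v) = v - D0 R (S0 R v) := eq_sub_of_add_eq' (a1 v)
    have c2 : S0 R (D1 R v) = - D1 R x := by rw [hx, neg_neg]
    have c3 : D0 R x = v - D1 R x := by rw [hv, LinearMap.add_apply]; abel
    rw [hw, LinearMap.add_apply, map_add, c1, c2, map_sub, c3]
    abel
  have b2 : D0 R (S0 R w) = 0 := by rw [b1, a2]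
  have b3 : w = S0 R (D0 R w) := by
    have := a1 w
    rw [b2, zero_add] at this
    exact this.symm
  have b4 : D0 R w = - D1 R w := by
    rw [LinearMap.add_apply] at hD
    exact eq_neg_of_add_eq_zero_left hD
  apply nilp R
  rw [b4, map_neg] at b3
  exact add_eq_zero_iff_eq_neg.mpr b3

theorem DD_Y (s : ℕ) (y : Yc k H E s) : (D0 R + D1 R) ((D0 R + D1 R) (jY k A H E s y)) = 0 := by
  simp only [LinearMap.add_apply, D0_Y, zero_add]
  rcases s with _ | _ | s
  · rw [D1_Y0, map_zero, map_zero, add_zero]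
  · rw [D1_Y, D1_Y0, D0_Y, add_zero]
  · rw [D1_Y, D1_Y, D0_Y, zero_add]
    have := LinearMap.congr_fun (del_del R s) y
    rw [LinearMap.comp_apply] at this
    rw [this, LinearMap.zero_apply, map_zero]

theorem DD_ext (r s : ℕ) (h : ∀ (hs : Fin s → H) (as : Fin r → A),
      (D0 R + D1 R) ((D0 R + D1 R) (jX k A H E r s (xgen (1 : E) hs as (1 : E)))) = 0)
    (x : Xc k A H E r s) : (D0 R + D1 R) ((D0 R + D1 R) (jX k A H E r s x)) = 0 := by
  suffices ((D0 R + D1 R) * (D0 R + D1 R)) ∘ₗ jX k A H E r s = 0 from LinearMap.congr_fun this x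
  apply X_ext
  intro e hs as e'
  have hL : LZ k A H e * (D0 R + D1 R) = (D0 R + D1 R) * LZ k A H e := by
    rw [mul_add, add_mul, L_D0, L_D1]
  have hR : RZ R e' * (D0 R + D1 R) = (D0 R + D1 R) * RZ R e' := by
    rw [mul_add, add_mul, R_D0, R_D1]
  have hL' : ∀ z, LZ k A H e ((D0 R + D1 R) z) = (D0 R + D1 R) (LZ k A H e z) :=
    fun z => LinearMap.congr_fun hL z
  have hR' : ∀ z, RZ R e' ((D0 R + D1 R) z) = (D0 R + D1 R) (RZ R e' z) :=
    fun z => LinearMap.congr_fun hR z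
  have hx : (xgen e hs as e' : Xc k A H E r s) = lX e (rX e' (xgen 1 hs as 1)) := by
    simp only [xgen, lX, rX, TensorProduct.map_tmul, LinearMap.mulLeft_apply,
      LinearMap.mulRight_apply, LinearMap.id_apply, mul_one, one_mul]
  rw [LinearMap.comp_apply, Module.End.mul_apply, hx, ← LZ_X, ← RZ_X R, ← hL', ← hR', ← hL', ← hR',
    h, map_zero, map_zero, LinearMap.zero_apply]

theorem DD_X (s r : ℕ) (x : Xc k A H E r s) :
    (D0 R + D1 R) ((D0 R + D1 R) (jX k A H E r s x)) = 0 := by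
  induction s using Nat.strong_induction_on generalizing r with
  | _ s ih =>
    have hD1 : ∀ r (x : Xc k A H E r s),
        (D0 R + D1 R) ((D0 R + D1 R) (D1 R (jX k A H E r s x))) = 0 := by
      intro r x
      rw [D1_X, map_sum, map_sum]
      refine Finset.sum_eq_zero fun l hl => ?_
      rw [Finset.mem_range] at hl
      rw [Dl_X]
      exact ih _ (by omega) _ _
    have main : ∀ r, (∀ x : Xc k A H E r s,
        (D0 R + D1 R) ((D0 R + D1 R) (D0 R (jX k A H E r s x))) = 0) → ∀ x : Xc k A H E r s,
        (D0 R + D1 R) ((D0 R + D1 R) (jX k A H E r s x)) = 0 := by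
      intro r hr x
      apply DD_ext
      intro hs as
      apply gen_step R _ (gen_eq R r s hs as)
      rw [LinearMap.add_apply (D0 R) (D1 R) (jX k A H E r s _), map_add, map_add, hr, hD1, add_zero]
    induction r with
    | zero =>
      refine main 0 (fun x => ?_) x
      rw [D0_X0]
      exact DD_Y R _ _
    | succ r ihr =>
      refine main (r + 1) (fun x => ?_) x
      rw [D0_X]
      exact ihr _

theorem DD : (D0 R + D1 R) * (D0 R + D1 R) = 0 := by
  apply Z_ext
  · intro r s x
    exact DD_X R s r x
  · intro s x
    exact DD_Y R s x

section Sig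
variable (slY : ∀ l s : ℕ, Yc k H E s →ₗ[k] Xc k A H E l (s - l))
    (slX : ∀ l r s : ℕ, Xc k A H E r s →ₗ[k] Xc k A H E (r + l + 1) (s - l))

def SZ : Module.End k (Zt k A H E) :=
  mkZ (fun r s => ∑ l ∈ Finset.range (s + 1), jX k A H E _ _ ∘ₗ slX l r s)
    (fun s => ∑ l ∈ Finset.range (s + 1), jX k A H E _ _ ∘ₗ slY l s)

theorem SZ_X (r s : ℕ) (x : Xc k A H E r s) :
    SZ slY slX (jX k A H E r s x) =
      ∑ l ∈ Finset.range (s + 1), jX k A H E _ _ (slX l r s x) := by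
  rw [SZ, mkZ_jX, LinearMap.sum_apply]; rfl
theorem SZ_Y (s : ℕ) (x : Yc k H E s) :
    SZ slY slX (jY k A H E s x) =
      ∑ l ∈ Finset.range (s + 1), jX k A H E _ _ (slY l s x) := by
  rw [SZ, mkZ_jY, LinearMap.sum_apply]; rfl

theorem SZ_eq (p1 : ∀ l : ℕ, 1 ≤ l → (l - 1) + 1 = l)
    (p2 : ∀ (l : ℕ) (i : Fin l), (i : ℕ) + (l - (i : ℕ)) - 1 = l - 1)
    (p3 : ∀ (l s : ℕ) (_ : l ≤ s) (i : Fin l), (s - (i : ℕ)) - (l - (i : ℕ)) = s - l)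
    (p4 : ∀ (l r : ℕ) (i : Fin l), (r + (i : ℕ) + 1) + (l - (i : ℕ)) - 1 = r + l)
    (hslY0 : ∀ s : ℕ, slY 0 s = R.sig0 s)
    (hslX0 : ∀ r s : ℕ, slX 0 r s = R.sig r s)
    (hslY : ∀ (l s : ℕ) (hl : 1 ≤ l) (hls : l ≤ s),
      slY l s = - ∑ i : Fin l,
        xcast (p1 l hl) rfl ∘ₗ
          R.sig (l - 1) (s - l) ∘ₗ
          xcast
            (p2 l i)
            (p3 l s hls i) ∘ₗ
          R.dl (l - (i : ℕ)) (i : ℕ) (s - (i : ℕ)) ∘ₗ slY (i : ℕ) s)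
    (hslX : ∀ (l r s : ℕ) (hl : 1 ≤ l) (hls : l ≤ s),
      slX l r s = - ∑ i : Fin l,
        R.sig (r + l) (s - l) ∘ₗ
          xcast
            (p4 l r i)
            (p3 l s hls i) ∘ₗ
          R.dl (l - (i : ℕ)) (r + (i : ℕ) + 1) (s - (i : ℕ)) ∘ₗ slX (i : ℕ) r s) :
    SZ slY slX = S0 R - S0 R * D1 R * SZ slY slX := by
  have flip : ∀ (s : ℕ) (z : ℕ → Zt k A H E) (g : ℕ → ℕ → Zt k A H E)
      (_ : ∀ l, 1 ≤ l → l ≤ s → z l = - ∑ i ∈ Finset.range l, g i (l - i)),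
      ∑ l ∈ Finset.range (s + 1), z l =
        z 0 - ∑ i ∈ Finset.range (s + 1), ∑ m ∈ Finset.range (s - i), g i (m + 1) := by
    intro s z g hz
    rw [Finset.sum_range_succ', Finset.sum_range_succ _ s, Nat.sub_self, Finset.sum_range_zero,
      add_zero, ← Finset.sum_range_diag_flip s (fun j m => g j (m + 1)), add_comm, sub_eq_add_neg,
      ← Finset.sum_neg_distrib]
    congr 1
    refine Finset.sum_congr rfl fun l hl => ?_
    rw [Finset.mem_range] at hl
    rw [hz (l + 1) (by omega) (by omega)]
    congr 1
    refine Finset.sum_congr rfl fun j hj => ?_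
    rw [Finset.mem_range] at hj
    rw [show l + 1 - j = l - j + 1 by omega]
  apply Z_ext
  · intro r s x
    simp only [LinearMap.sub_apply, Module.End.mul_apply]
    rw [SZ_X, S0_X, ← hslX0, map_sum, map_sum]
    simp only [D1_X, map_sum]
    refine flip s (fun l => jX k A H E _ _ (slX l r s x))
      (fun i m => S0 R (Dl R m (jX k A H E _ _ (slX i r s x)))) ?_
    intro l h1 h2
    rw [hslX l r s h1 h2, Finset.sum_range, LinearMap.neg_apply, LinearMap.sum_apply, map_neg,
      map_sum]
    congr 1
    refine Finset.sum_congr rfl fun j _ => ?_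
    simp only [LinearMap.comp_apply]
    rw [Dl_X, ← jX_cast (p4 l r j) (p3 l s h2 j), S0_X]
  · intro s x
    simp only [LinearMap.sub_apply, Module.End.mul_apply]
    rw [SZ_Y, S0_Y, ← hslY0, map_sum, map_sum]
    simp only [D1_X, map_sum]
    refine flip s (fun l => jX k A H E _ _ (slY l s x))
      (fun i m => S0 R (Dl R m (jX k A H E _ _ (slY i s x)))) ?_
    intro l h1 h2
    rw [hslY l s h1 h2, Finset.sum_range, LinearMap.neg_apply, LinearMap.sum_apply, map_neg,
      map_sum]
    congr 1
    refine Finset.sum_congr rfl fun j _ => ?_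
    simp only [LinearMap.comp_apply]
    rw [jX_cast, ← S0_X, jX_cast, Dl_X]

theorem SZ_htpy (ht : SZ slY slX = S0 R - S0 R * D1 R * SZ slY slX) :
    (D0 R + D1 R) * SZ slY slX + SZ slY slX * (D0 R + D1 R) = 1 :=
  perturb (D0 R) (S0 R) (D1 R) (SZ slY slX) (D0S0 R) (D0D0 R) (DD R) ht (nilp_end R)

theorem L_SZ (ht : SZ slY slX = S0 R - S0 R * D1 R * SZ slY slX) (e : E) :
    LZ k A H e * SZ slY slX = SZ slY slX * LZ k A H e := by
  have key := nilp_end R (LZ k A H e * SZ slY slX - SZ slY slX * LZ k A H e) (by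
    have e1 : S0 R * D1 R * SZ slY slX = S0 R - SZ slY slX := by
      rw [eq_sub_iff_add_eq, add_comm, ← eq_sub_iff_add_eq]; exact ht
    have e2 : S0 R * D1 R * (LZ k A H e * SZ slY slX) =
        LZ k A H e * (S0 R * D1 R * SZ slY slX) := by
      rw [mul_assoc, ← mul_assoc (D1 R), ← L_D1, mul_assoc, ← mul_assoc (S0 R), ← L_S0, mul_assoc,
        mul_assoc]
    have e3 : S0 R * D1 R * (SZ slY slX * LZ k A H e) =
        (S0 R * D1 R * SZ slY slX) * LZ k A H e := by rw [mul_assoc, mul_assoc, mul_assoc]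
    rw [mul_sub, e2, e3, e1, mul_sub, sub_mul, L_S0]
    abel)
  exact sub_eq_zero.mp key

end Sig

end AuxW

section AuxT
variable {k A H E : Type} [CommRing k] [Ring A] [Algebra k A] [Ring H] [HopfAlgebra k H]
  [Ring E] [Algebra k E] {S : CrossedProduct k A H E} (R : ResData k A H E S)

variable (k A H E) in
def iT (n : ℕ) (s : Fin (n + 1)) : Xc k A H E (n - (s : ℕ)) (s : ℕ) →ₗ[k] XT k A H E n :=
  DirectSum.lof k (Fin (n + 1)) (fun s' : Fin (n + 1) => Xc k A H E (n - (s' : ℕ)) (s' : ℕ)) s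

variable (k A H E) in
def jT (n : ℕ) : XT k A H E n →ₗ[k] Zt k A H E :=
  DirectSum.toModule k (Fin (n + 1)) (Zt k A H E) (fun s => jX k A H E (n - (s : ℕ)) (s : ℕ))

theorem jT_lof (n : ℕ) (s : Fin (n + 1)) (x : Xc k A H E (n - (s : ℕ)) (s : ℕ)) :
    jT k A H E n (iT k A H E n s x) = jX k A H E _ _ x :=
  DirectSum.toModule_lof (ι := Fin (n + 1))
    (M := fun s' : Fin (n + 1) => Xc k A H E (n - (s' : ℕ)) (s' : ℕ)) k
    (φ := fun s => jX k A H E (n - (s : ℕ)) (s : ℕ)) s x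

theorem grp_aux {G : Type} [AddCommGroup G] {z a m q d b p : G}
    (h1 : z - (a + m) - (0 - q) = d + 0) (h2 : b = a + p) (h3 : p + q = m) : b + d = z := by
  rw [← add_zero d, ← h1, h2, ← h3]; abel

theorem grp_aux0 {G : Type} [AddCommGroup G] {z m q d p : G}
    (h1 : z - m - (0 - q) = d + 0) (h3 : p + q = m) : p + d = z := by
  rw [← add_zero d, ← h1, ← h3]; abel

theorem T_ext {M : Type} [AddCommGroup M] [Module k M] {n : ℕ} {f g : XT k A H E n →ₗ[k] M}
    (h : ∀ s x, f (iT k A H E n s x) = g (iT k A H E n s x)) : f = g := by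
  apply DirectSum.linearMap_ext
  intro s
  apply LinearMap.ext
  intro x
  exact h s x

variable (k A H E) in
def pT (n : ℕ) : Zt k A H E →ₗ[k] XT k A H E n :=
  mkZ (fun r s => if h : r + s = n then
    iT k A H E n ⟨s, by omega⟩ ∘ₗ xcast (by show r = n - s; omega) rfl else 0) (fun _ => 0)

variable (k A H E) in
def pY (n : ℕ) : Zt k A H E →ₗ[k] Yc k H E n :=
  mkZ (fun _ _ => 0) (DirectSum.component k ℕ (fun s => Yc k H E s) n ∘ₗ
    DirectSum.lof k ℕ (fun s => Yc k H E s) ·)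

theorem xcast_self {r s : ℕ} (hr : r = r) (hs : s = s) (x : Xc k A H E r s) :
    xcast hr hs x = x := rfl

theorem pT_jT (n : ℕ) (z : XT k A H E n) : pT k A H E n (jT k A H E n z) = z := by
  have : pT k A H E n ∘ₗ jT k A H E n = LinearMap.id := by
    apply T_ext
    intro s x
    rw [LinearMap.comp_apply, jT_lof, pT, mkZ_jX, dif_pos (by have := s.isLt; omega)]
    rfl
  exact LinearMap.congr_fun this z

theorem pT_jY (n s : ℕ) (y : Yc k H E s) : pT k A H E n (jY k A H E s y) = 0 := by
  rw [pT, mkZ_jY]; rfl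

theorem pY_jY (n : ℕ) (y : Yc k H E n) : pY k A H E n (jY k A H E n y) = y := by
  rw [pY, mkZ_jY, LinearMap.comp_apply]
  exact DirectSum.component.lof_self k n y

theorem pY_jT (n m : ℕ) (z : XT k A H E m) : pY k A H E n (jT k A H E m z) = 0 := by
  have : pY k A H E n ∘ₗ jT k A H E m = 0 := by
    apply T_ext
    intro s x
    rw [LinearMap.comp_apply, jT_lof, pY, mkZ_jX]
    rfl
  exact LinearMap.congr_fun this z

theorem dT_lof (n : ℕ) (s : Fin (n + 2)) (x : Xc k A H E (n + 1 - (s : ℕ)) (s : ℕ)) :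
    jT k A H E n (dT R n (iT k A H E (n + 1) s x)) =
      ∑ l ∈ Finset.range ((s : ℕ) + 1), if 0 < (n + 1 - (s : ℕ)) + l then
        Dl R l (jX k A H E _ _ x) else 0 := by
  have := DirectSum.toModule_lof (ι := Fin (n + 2))
    (M := fun s' : Fin (n + 2) => Xc k A H E (n + 1 - (s' : ℕ)) (s' : ℕ)) k
    (φ := fun s =>
    ∑ l : Fin ((s : ℕ) + 1),
      if h : 0 < (n + 1 - (s : ℕ)) + (l : ℕ) then
        (DirectSum.lof k (Fin (n + 1)) (fun s' : Fin (n + 1) => Xc k A H E (n - (s' : ℕ)) (s' : ℕ))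
            ⟨(s : ℕ) - (l : ℕ), by have := s.isLt; have := l.isLt; omega⟩) ∘ₗ
          xcast
            (show (n + 1 - (s : ℕ)) + (l : ℕ) - 1 = n - ((s : ℕ) - (l : ℕ)) by
              have := s.isLt; have := l.isLt; omega)
            rfl ∘ₗ
          R.dl (l : ℕ) (n + 1 - (s : ℕ)) (s : ℕ)
      else 0) s x
  refine (congrArg (jT k A H E n) this).trans ?_
  rw [LinearMap.sum_apply, map_sum, Finset.sum_range]
  refine Finset.sum_congr rfl fun l _ => ?_
  split_ifs with h
  · rw [Dl_X]
    refine (jT_lof n ⟨(s : ℕ) - (l : ℕ), by have := s.isLt; have := l.isLt; omega⟩ _).trans ?_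
    exact jX_cast (show (n + 1 - (s : ℕ)) + (l : ℕ) - 1 = n - ((s : ℕ) - (l : ℕ)) by
              have := s.isLt; have := l.isLt; omega) rfl _
  · rw [LinearMap.zero_apply, map_zero]

theorem muT_lof (n : ℕ) (s : Fin (n + 1)) (x : Xc k A H E (n - (s : ℕ)) (s : ℕ)) :
    muT R n (iT k A H E n s x) = (if h : (s : ℕ) = n then
      R.mu n ∘ₗ xcast (show n - (s : ℕ) = 0 by omega) h
    else 0 : Xc k A H E (n - (s : ℕ)) (s : ℕ) →ₗ[k] Yc k H E n) x :=
  DirectSum.toModule_lof (ι := Fin (n + 1))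
    (M := fun s' : Fin (n + 1) => Xc k A H E (n - (s' : ℕ)) (s' : ℕ)) k (φ := fun s =>
    if h : (s : ℕ) = n then
      R.mu n ∘ₗ xcast (show n - (s : ℕ) = 0 by omega) h
    else 0) s x

theorem D0_top (n s : ℕ) (hr : n = 0) (m : ℕ) (hs : s = m) (x : Xc k A H E n s) :
    D0 R (jX k A H E n s x) = jY k A H E m (R.mu m (xcast hr hs x)) := by
  subst hr hs; exact D0_X0 R _ x

theorem D0_low (r s : ℕ) (hr : 0 < r) (x : Xc k A H E r s) :
    D0 R (jX k A H E r s x) = Dl R 0 (jX k A H E r s x) := by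
  obtain ⟨r, rfl⟩ : ∃ q, r = q + 1 := ⟨r - 1, by omega⟩
  exact D0_Xl R r s x

theorem D_jT (n : ℕ) (z : XT k A H E (n + 1)) :
    (D0 R + D1 R) (jT k A H E (n + 1) z) =
      jT k A H E n (dT R n z) + jY k A H E (n + 1) (muT R (n + 1) z) := by
  have : (D0 R + D1 R) ∘ₗ jT k A H E (n + 1) =
      jT k A H E n ∘ₗ dT R n + jY k A H E (n + 1) ∘ₗ muT R (n + 1) := by
    apply T_ext
    intro s x
    simp only [LinearMap.add_apply, LinearMap.comp_apply]
    rw [dT_lof, jT_lof, muT_lof, Finset.sum_range_succ', D1_X]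
    have e : ∀ l, 0 < (n + 1 - (s : ℕ)) + (l + 1) := fun l => by omega
    simp only [e, if_true]
    by_cases h : (s : ℕ) = n + 1
    · rw [dif_pos h, if_neg (by omega), add_zero, LinearMap.comp_apply,
        D0_top R (n + 1 - (s : ℕ)) s (by omega) (n + 1) h, add_comm]
    · rw [dif_neg h, if_pos (by have := s.isLt; omega), LinearMap.zero_apply, map_zero, add_zero,
        D0_low R _ _ (by have := s.isLt; omega), add_comm]
  exact LinearMap.congr_fun this z

theorem D_jT0 (z : XT k A H E 0) :
    (D0 R + D1 R) (jT k A H E 0 z) = jY k A H E 0 (muT R 0 z) := by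
  have : (D0 R + D1 R) ∘ₗ jT k A H E 0 = jY k A H E 0 ∘ₗ muT R 0 := by
    apply T_ext
    intro s x
    simp only [LinearMap.add_apply, LinearMap.comp_apply]
    have h : (s : ℕ) = 0 := by omega
    rw [jT_lof, muT_lof, D1_X, dif_pos h, D0_top R (0 - (s : ℕ)) s (by omega) 0 h,
      Finset.sum_eq_zero (fun l hl => absurd hl (by rw [Finset.mem_range]; omega)), add_zero]
    rfl
  exact LinearMap.congr_fun this z

theorem pY_D (n : ℕ) (z : XT k A H E n) :
    pY k A H E n ((D0 R + D1 R) (jT k A H E n z)) = muT R n z := by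
  cases n with
  | zero => rw [D_jT0, pY_jY]
  | succ n => rw [D_jT, map_add, pY_jT, pY_jY, zero_add]

theorem D_jY (n : ℕ) (y : Yc k H E (n + 1)) :
    (D0 R + D1 R) (jY k A H E (n + 1) y) = jY k A H E n (R.del n y) := by
  rw [LinearMap.add_apply, D0_Y, D1_Y, zero_add]

theorem mu_dT (n : ℕ) (z : XT k A H E (n + 1)) :
    muT R n (dT R n z) = - R.del n (muT R (n + 1) z) := by
  have h := congrArg (pY k A H E n) (LinearMap.congr_fun (DD R) (jT k A H E (n + 1) z))
  rw [Module.End.mul_apply, LinearMap.zero_apply, map_zero, D_jT, map_add, map_add, pY_D, D_jY,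
    pY_jY] at h
  exact eq_neg_of_add_eq_zero_left h

variable (slY : ∀ l s : ℕ, Yc k H E s →ₗ[k] Xc k A H E l (s - l))
    (slX : ∀ l r s : ℕ, Xc k A H E r s →ₗ[k] Xc k A H E (r + l + 1) (s - l))
    (sY : ∀ s : ℕ, Yc k H E s →ₗ[k] Yc k H E (s + 1))

theorem jT_sbar (n : ℕ) (z : XT k A H E n) :
    jT k A H E (n + 1) (sbar R slY slX sY n z) = SZ slY slX (jT k A H E n z)
      - SZ slY slX (jY k A H E (n + 1) (sY n (muT R n z))) := by
  rw [sbar, LinearMap.add_apply, LinearMap.neg_apply, map_add, map_neg, sub_eq_add_neg, add_comm]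
  congr 1
  · refine LinearMap.congr_fun (f := jT k A H E (n + 1) ∘ₗ _)
      (g := SZ slY slX ∘ₗ jT k A H E n) (T_ext fun s x => ?_) z
    simp only [LinearMap.comp_apply]
    rw [jT_lof, SZ_X]
    refine (congrArg (jT k A H E (n + 1)) (DirectSum.toModule_lof (ι := Fin (n + 1))
      (M := fun s' : Fin (n + 1) => Xc k A H E (n - (s' : ℕ)) (s' : ℕ)) k s x)).trans ?_
    rw [LinearMap.sum_apply, map_sum, Finset.sum_range]
    refine Finset.sum_congr rfl fun l _ => ?_
    refine (jT_lof (n + 1) ⟨(s : ℕ) - (l : ℕ), by have := s.isLt; have := l.isLt; omega⟩ _).trans ?_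
    exact jX_cast (show (n - (s : ℕ)) + (l : ℕ) + 1 = n + 1 - ((s : ℕ) - (l : ℕ)) by
              have := s.isLt; have := l.isLt; omega) rfl _
  · congr 1
    rw [LinearMap.comp_apply, LinearMap.sum_apply, map_sum, SZ_Y, Finset.sum_range]
    refine Finset.sum_congr rfl fun l _ => ?_
    refine (jT_lof (n + 1) ⟨n + 1 - (l : ℕ), by omega⟩ _).trans ?_
    exact jX_cast (show (l : ℕ) = n + 1 - (n + 1 - (l : ℕ)) by have := l.isLt; omega) rfl _

theorem jT_lT (e : E) (n : ℕ) (z : XT k A H E n) :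
    jT k A H E n (lT e n z) = LZ k A H e (jT k A H E n z) := by
  refine LinearMap.congr_fun (f := jT k A H E n ∘ₗ lT e n)
      (g := LZ k A H e ∘ₗ jT k A H E n) (T_ext fun s x => ?_) z
  simp only [LinearMap.comp_apply]
  rw [jT_lof, LZ_X]
  refine (congrArg (jT k A H E n) (DirectSum.toModule_lof (ι := Fin (n + 1))
      (M := fun s' : Fin (n + 1) => Xc k A H E (n - (s' : ℕ)) (s' : ℕ)) k s x)).trans ?_
  exact jT_lof n s _

theorem pY_LZ (e : E) (n : ℕ) (z : Zt k A H E) :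
    pY k A H E n (LZ k A H e z) = lY e (pY k A H E n z) := by
  refine LinearMap.congr_fun (f := pY k A H E n ∘ₗ LZ k A H e)
      (g := lY e ∘ₗ pY k A H E n) (Z_ext (fun r s x => ?_) (fun s x => ?_)) z
  · simp only [LinearMap.comp_apply]
    rw [LZ_X, pY, mkZ_jX, mkZ_jX, LinearMap.zero_apply, LinearMap.zero_apply, map_zero]
  · simp only [LinearMap.comp_apply]
    rw [LZ_Y, pY, mkZ_jY, mkZ_jY]
    simp only [LinearMap.comp_apply]
    by_cases h : s = n
    · subst h
      rw [DirectSum.component.lof_self, DirectSum.component.lof_self]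
    · rw [DirectSum.component.of, DirectSum.component.of, dif_neg h, dif_neg h, map_zero]

theorem muT_lT (e : E) (n : ℕ) (z : XT k A H E n) : muT R n (lT e n z) = lY e (muT R n z) := by
  have h : LZ k A H e * (D0 R + D1 R) = (D0 R + D1 R) * LZ k A H e := by
    rw [mul_add, add_mul, L_D0, L_D1]
  rw [← pY_D, jT_lT, ← Module.End.mul_apply, ← h, Module.End.mul_apply, pY_LZ, pY_D]

theorem sbar_succ (ht : SZ slY slX = S0 R - S0 R * D1 R * SZ slY slX)
    (hc : ∀ s, sY s ∘ₗ R.del s + R.del (s + 1) ∘ₗ sY (s + 1) = LinearMap.id) (n : ℕ) :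
    sbar R slY slX sY n ∘ₗ dT R n + dT R (n + 1) ∘ₗ sbar R slY slX sY (n + 1) =
      LinearMap.id := by
  apply LinearMap.ext
  intro z
  simp only [LinearMap.add_apply, LinearMap.comp_apply, LinearMap.id_apply]
  have hh : ∀ w, (D0 R + D1 R) (SZ slY slX w) = w - SZ slY slX ((D0 R + D1 R) w) := fun w => by
    rw [eq_sub_iff_add_eq]; exact LinearMap.congr_fun (SZ_htpy R slY slX ht) w
  have h1 := D_jT R (n + 1) (sbar R slY slX sY (n + 1) z)
  have hcz := LinearMap.congr_fun (hc n) (muT R (n + 1) z)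
  simp only [LinearMap.add_apply, LinearMap.comp_apply, LinearMap.id_apply] at hcz
  rw [jT_sbar, map_sub, hh, hh, D_jT, D_jY] at h1
  rw [map_add] at h1
  have h2 := jT_sbar R slY slX sY n (dT R n z)
  rw [mu_dT, map_neg, map_neg, map_neg, sub_neg_eq_add] at h2
  have h3 := congrArg (fun y => SZ slY slX (jY k A H E (n + 1) y)) hcz
  simp only [map_add] at h3
  have h4 := congrArg (pT k A H E (n + 1)) h1
  have h5 := congrArg (pT k A H E (n + 1)) h3
  have h6 := congrArg (pT k A H E (n + 1)) h2
  simp only [map_add, map_sub, pT_jY, pT_jT] at h4 h5 h6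
  exact grp_aux h4 h6 h5

theorem multT_lof (mult : Xc k A H E 0 0 →ₗ[k] E) (mutil : Yc k H E 0 →ₗ[k] E)
    (h : mutil ∘ₗ R.mu 0 = - mult) : - multT mult = mutil ∘ₗ muT R 0 := by
  apply T_ext
  intro s x
  rw [LinearMap.neg_apply, LinearMap.comp_apply, muT_lof, dif_pos (by omega), LinearMap.comp_apply]
  have h' : ∀ y, mutil (R.mu 0 y) = - mult y := fun y => LinearMap.congr_fun h y
  rw [h']
  congr 1
  exact DirectSum.toModule_lof (ι := Fin 1)
    (M := fun s' : Fin 1 => Xc k A H E (0 - (s' : ℕ)) (s' : ℕ)) k s x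

theorem jT_sbar0 (σm : E →ₗ[k] Yc k H E 0) (e : E) :
    jT k A H E 0 (sbar0 R σm e) = jX k A H E 0 0 (R.sig0 0 (σm e)) :=
  jT_lof 0 0 _

theorem muT_sbar0 (σm : E →ₗ[k] Yc k H E 0) (e : E) : muT R 0 (sbar0 R σm e) = σm e := by
  rw [← pY_D, jT_sbar0, LinearMap.add_apply, D0_X0, D1_X, Finset.sum_range_zero, add_zero, pY_jY]
  exact LinearMap.congr_fun (mu_sig0 R 0) _

theorem sbar_zero (ht : SZ slY slX = S0 R - S0 R * D1 R * SZ slY slX)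
    (hslY0 : ∀ s : ℕ, slY 0 s = R.sig0 s) (σm : E →ₗ[k] Yc k H E 0)
    (mult : Xc k A H E 0 0 →ₗ[k] E) (mutil : Yc k H E 0 →ₗ[k] E)
    (h : mutil ∘ₗ R.mu 0 = - mult)
    (hc : σm ∘ₗ mutil + R.del 0 ∘ₗ sY 0 = LinearMap.id) :
    sbar0 R σm ∘ₗ (-(multT mult)) + dT R 0 ∘ₗ sbar R slY slX sY 0 = LinearMap.id := by
  rw [multT_lof R mult mutil h]
  apply LinearMap.ext
  intro z
  simp only [LinearMap.add_apply, LinearMap.comp_apply, LinearMap.id_apply]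
  have hh : ∀ w, (D0 R + D1 R) (SZ slY slX w) = w - SZ slY slX ((D0 R + D1 R) w) := fun w => by
    rw [eq_sub_iff_add_eq]; exact LinearMap.congr_fun (SZ_htpy R slY slX ht) w
  have h1 := D_jT R 0 (sbar R slY slX sY 0 z)
  have hcz := LinearMap.congr_fun hc (muT R 0 z)
  simp only [LinearMap.add_apply, LinearMap.comp_apply, LinearMap.id_apply] at hcz
  rw [jT_sbar, map_sub, hh, hh, D_jT0, D_jY] at h1
  have h3 := congrArg (fun y => SZ slY slX (jY k A H E 0 y)) hcz
  simp only [map_add] at h3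
  have h6 : SZ slY slX (jY k A H E 0 (σm (mutil (muT R 0 z)))) =
      jT k A H E 0 (sbar0 R σm (mutil (muT R 0 z))) := by
    rw [SZ_Y, jT_sbar0, Finset.sum_range_one, hslY0]
  rw [h6] at h3
  have h4 := congrArg (pT k A H E 0) h1
  simp only [map_add, map_sub, pT_jY, pT_jT] at h4
  have h5 := congrArg (pT k A H E 0) h3
  simp only [map_add, pT_jT] at h5
  exact grp_aux0 h4 h5

theorem sbar_lT (ht : SZ slY slX = S0 R - S0 R * D1 R * SZ slY slX)
    (hs : ∀ (s : ℕ) (e : E), sY s ∘ₗ lY e = lY e ∘ₗ sY s) (n : ℕ) (e : E) :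
    sbar R slY slX sY n ∘ₗ lT e n = lT e (n + 1) ∘ₗ sbar R slY slX sY n := by
  apply LinearMap.ext
  intro z
  simp only [LinearMap.comp_apply]
  have hL : ∀ w, SZ slY slX (LZ k A H e w) = LZ k A H e (SZ slY slX w) := fun w =>
    (LinearMap.congr_fun (L_SZ R slY slX ht e) w).symm
  have hs' : ∀ y, sY n (lY e y) = lY e (sY n y) := fun y => LinearMap.congr_fun (hs n e) y
  rw [← pT_jT (n + 1) (sbar R slY slX sY n (lT e n z)), ← pT_jT (n + 1) (lT e (n + 1) _)]
  congr 1
  rw [jT_lT, jT_sbar, jT_sbar, jT_lT, muT_lT, hs', ← LZ_Y, hL, hL, map_sub]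

theorem sbar0_lT (σm : E →ₗ[k] Yc k H E 0)
    (hs : ∀ e : E, σm ∘ₗ LinearMap.mulLeft k e = lY e ∘ₗ σm) (e : E) :
    sbar0 R σm ∘ₗ LinearMap.mulLeft k e = lT e 0 ∘ₗ sbar0 R σm := by
  apply LinearMap.ext
  intro z
  simp only [LinearMap.comp_apply]
  rw [← pT_jT 0 (sbar0 R σm _), ← pT_jT 0 (lT e 0 _)]
  congr 1
  rw [jT_lT, jT_sbar0, jT_sbar0, LZ_X]
  congr 1
  have h1 : σm (LinearMap.mulLeft k e z) = lY e (σm z) := LinearMap.congr_fun (hs e) z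
  rw [h1]
  exact LinearMap.congr_fun (sig0_lY R 0 e) _

end AuxT

section Statement2b

variable {k A H E : Type} [CommRing k] [Ring A] [Algebra k A] [Ring H] [HopfAlgebra k H]
  [Ring E] [Algebra k E]

/-- **Remark 1.1.2 (and the contractibility of the column `(Y_*, ∂_*)`).**
The augmented column `E ← Y₀ ← Y₁ ← ⋯`, with augmentation
`μ̃(a ⊗ (h₀ ⊗ h₁)) = -a f(h₀⁽¹⁾,h₁⁽¹⁾) # h₀⁽²⁾h₁⁽²⁾`, is contractible as a complex of
left `E`-modules with homotopy `σ⁻¹_{s+1}(x) = (-1)^s x ⊗ 1_H`.  Moreover, with the maps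
`σ^l` defined recursively by
`σ^l_{r+l+1,s-l} = -∑_{i=0}^{l-1} σ⁰_{r+l+1,s-l} ∘ d^{l-i}_{r+i+1,s-i} ∘ σ^i_{r+i+1,s-i}`,
the family `σ̄₀ = σ⁰₀₀∘σ⁻¹₀`,
`σ̄_{n+1} = -∑_{l=0}^{n+1} σ^l_{l,n-l+1}∘σ⁻¹_{n+1}∘μ_n + ∑_{r+s=n}∑_{l=0}^s σ^l_{r+l+1,s-l}`
is a contracting homotopy, by left `E`-linear maps, of the resolution of Theorem 1.1.1. -/
theorem column_contractible_and_sbar_homotopy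
    (S : CrossedProduct k A H E) (R : ResData k A H E S)
    -- `μ̃ : Y₀ → E`
    (mutil : Yc k H E 0 →ₗ[k] E)
    (hmutil : ∀ (a : A) (h₀ h₁ : H) (N M' : ℕ) (u : Fin N → Fin 2 → H)
      (v : Fin M' → Fin 2 → H), SRep k 1 h₀ N u → SRep k 1 h₁ M' v →
      mutil (ygen (S.ι (a ⊗ₜ[k] h₀)) (fun i : Fin 0 => i.elim0) h₁) =
        - ∑ i, ∑ j, S.ι ((a * S.f (u i 0) (v j 0)) ⊗ₜ[k] (u i 1 * v j 1)))
    -- `σ⁻¹₀ : E → Y₀` and `σ⁻¹_{s+1}(x) = (-1)^s x ⊗ 1_H`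
    (σm : E →ₗ[k] Yc k H E 0)
    (hσm : ∀ e : E, σm e = - ygen e (fun i : Fin 0 => i.elim0) 1)
    (sY : ∀ s : ℕ, Yc k H E s →ₗ[k] Yc k H E (s + 1))
    (hsY : ∀ (s : ℕ) (e : E) (hs : Fin s → H) (h : H),
      sY s (ygen e hs h) = ((-1 : ℤ) ^ s) • ygen e (Fin.snoc hs h) 1)
    -- the maps `σ^l`
    (slY : ∀ l s : ℕ, Yc k H E s →ₗ[k] Xc k A H E l (s - l))
    (slX : ∀ l r s : ℕ, Xc k A H E r s →ₗ[k] Xc k A H E (r + l + 1) (s - l))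
    (hslY0 : ∀ s : ℕ, slY 0 s = R.sig0 s)
    (hslX0 : ∀ r s : ℕ, slX 0 r s = R.sig r s)
    (hslY : ∀ (l s : ℕ) (hl : 1 ≤ l) (hls : l ≤ s),
      slY l s = - ∑ i : Fin l,
        xcast (show (l - 1) + 1 = l by omega) rfl ∘ₗ
          R.sig (l - 1) (s - l) ∘ₗ
          xcast
            (show (i : ℕ) + (l - (i : ℕ)) - 1 = l - 1 by have := i.isLt; omega)
            (show (s - (i : ℕ)) - (l - (i : ℕ)) = s - l by have := i.isLt; omega) ∘ₗ
          R.dl (l - (i : ℕ)) (i : ℕ) (s - (i : ℕ)) ∘ₗ slY (i : ℕ) s)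
    (hslX : ∀ (l r s : ℕ) (hl : 1 ≤ l) (hls : l ≤ s),
      slX l r s = - ∑ i : Fin l,
        R.sig (r + l) (s - l) ∘ₗ
          xcast
            (show (r + (i : ℕ) + 1) + (l - (i : ℕ)) - 1 = r + l by have := i.isLt; omega)
            (show (s - (i : ℕ)) - (l - (i : ℕ)) = s - l by have := i.isLt; omega) ∘ₗ
          R.dl (l - (i : ℕ)) (r + (i : ℕ) + 1) (s - (i : ℕ)) ∘ₗ slX (i : ℕ) r s)
    -- the augmentation `μ : X₀ → E` of the resolution of Theorem 1.1.1
    (mult : Xc k A H E 0 0 →ₗ[k] E)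
    (hmult : ∀ e e' : E,
      mult (xgen e (fun i : Fin 0 => i.elim0) (fun i : Fin 0 => i.elim0) e') = e * e') :
    -- (A) the augmented column is contractible as a complex of left `E`-modules,
    --     with the homotopy `σ⁻¹`
    (mutil ∘ₗ σm = LinearMap.id) ∧
    (σm ∘ₗ mutil + R.del 0 ∘ₗ sY 0 = LinearMap.id) ∧
    (∀ s : ℕ, sY s ∘ₗ R.del s + R.del (s + 1) ∘ₗ sY (s + 1) = LinearMap.id) ∧
    (∀ e : E, σm ∘ₗ LinearMap.mulLeft k e = lY e ∘ₗ σm) ∧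
    (∀ (s : ℕ) (e : E), sY s ∘ₗ lY e = lY e ∘ₗ sY s) ∧
    -- (B) `σ̄` is a contracting homotopy, by left `E`-linear maps, of the resolution
    ((-(multT mult)) ∘ₗ sbar0 R σm = LinearMap.id) ∧
    (sbar0 R σm ∘ₗ (-(multT mult)) + dT R 0 ∘ₗ sbar R slY slX sY 0 = LinearMap.id) ∧
    (∀ n : ℕ, sbar R slY slX sY n ∘ₗ dT R n + dT R (n + 1) ∘ₗ sbar R slY slX sY (n + 1) =
      LinearMap.id) ∧
    (∀ e : E, sbar0 R σm ∘ₗ LinearMap.mulLeft k e = lT e 0 ∘ₗ sbar0 R σm) ∧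
    (∀ (n : ℕ) (e : E),
      sbar R slY slX sY n ∘ₗ lT e n = lT e (n + 1) ∘ₗ sbar R slY slX sY n) := by
  have hm := mutil_g mutil hmutil
  have ht := SZ_eq R slY slX (fun l hl => by omega) (fun l i => by have := i.isLt; omega)
    (fun l s hls i => by have := i.isLt; omega) (fun l r i => by have := i.isLt; omega) hslY0 hslX0 hslY hslX
  have hc0 := col_zero R mutil hm σm hσm sY hsY
  have hc := col_succ R sY hsY
  have hl := sY_lY sY S hsY
  have hmm := mutil_mu R mutil hm mult hmult
  have h1 : mutil ∘ₗ σm = LinearMap.id := by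
    apply LinearMap.ext
    intro e
    rw [LinearMap.comp_apply, hσm, map_neg, hm, hE_one, mul_one, neg_neg, LinearMap.id_apply]
  have h2 : ∀ e : E, σm ∘ₗ LinearMap.mulLeft k e = lY e ∘ₗ σm := by
    intro e
    apply LinearMap.ext
    intro e'
    rw [LinearMap.comp_apply, LinearMap.comp_apply, hσm, hσm, map_neg]
    rfl
  refine ⟨h1, hc0, hc, h2, hl, ?_, sbar_zero R slY slX sY ht hslY0 σm mult mutil hmm hc0,
    sbar_succ R slY slX sY ht hc, sbar0_lT R σm h2, sbar_lT R slY slX sY ht hl⟩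
  rw [multT_lof R mult mutil hmm]
  apply LinearMap.ext
  intro e
  rw [LinearMap.comp_apply, LinearMap.comp_apply, muT_sbar0]
  exact LinearMap.congr_fun h1 e

end Statement2b

end HopfCrossed
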